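/- arXiv:math/0205116 — 4 statements merged into one kernel-verified Lean document; each statement's English description precedes it below -/
import Mathlib

section
/- Let k be an even positive integer. Suppose Z(τ,σ) is a holomorphic function on H × H admitting an absolutely convergent expansion Z(τ,σ) = ∑_{n,m=0}^∞ a_{n,m} q^n r^m with q = e^{2πiτ}, r = e^{2πiσ}, satisfying Z(τ,σ) = −Z(σ,τ), and obeying the three-term relations Z(τ,σ) = Z(τ,τ+σ) + Z(τ+σ,σ) for all τ,σ ∈ H and Z(τ,σ) = τ^{−k} Z(−1/τ, σ/τ) + σ^{−k} Z(−τ/σ, −1/σ) for all τ,σ ∈ H with σ/τ ∈ H. Then there exists a modular form G of weight k for SL(2,ℤ) such that Z(τ,σ) = G(τ) − G(σ) for all τ,σ ∈ H. -/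
open Complex Filter Topology

/-- The open upper half-plane as a subset of `ℂ`. -/
def UHP : Set ℂ := {z : ℂ | 0 < z.im}

/-- `qexp τ = e^{2πiτ}`. -/
noncomputable def qexp (τ : ℂ) : ℂ := Complex.exp (2 * Real.pi * Complex.I * τ)

/-- Elliptic zeta values `Z_k(τ,σ)`. -/
noncomputable def ellipticZeta (k : ℕ) (τ σ : ℂ) : ℂ :=
  -((2 * (Real.pi : ℂ) * Complex.I) ^ k / (Nat.factorial (k - 1) : ℂ)) *
    ∑' j : ℕ+, (j : ℂ) ^ (k - 1) *
      (qexp τ ^ (j : ℕ) - (-1 : ℂ) ^ k * qexp σ ^ (j : ℕ)) /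
      ((1 - qexp τ ^ (j : ℕ)) * (1 - qexp σ ^ (j : ℕ)))

/-- `D_k(q)`: the normalized generating function of sums of `(k-1)`-st powers of divisors. -/
noncomputable def Dk (k : ℕ) (q : ℂ) : ℂ :=
  ((-2 * (Real.pi : ℂ) * Complex.I) ^ k / (Nat.factorial (k - 1) : ℂ)) *
    ∑' n : ℕ+, (∑ d ∈ Nat.divisors (n : ℕ), (d : ℂ) ^ (k - 1)) * q ^ (n : ℕ)

/-- Ruijsenaars's elliptic gamma function. -/
noncomputable def ellipticGamma (z τ σ : ℂ) : ℂ :=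
  ∏' p : ℕ × ℕ,
    (1 - qexp τ ^ (p.1 + 1) * qexp σ ^ (p.2 + 1) * Complex.exp (-(2 * Real.pi * Complex.I) * z)) /
    (1 - qexp τ ^ p.1 * qexp σ ^ p.2 * Complex.exp (2 * Real.pi * Complex.I * z))

/-- The modified theta function `θ₀(z,τ)`. -/
noncomputable def theta0 (z τ : ℂ) : ℂ :=
  ∏' j : ℕ, (1 - qexp τ ^ (j + 1) * Complex.exp (-(2 * Real.pi * Complex.I) * z)) *
            (1 - qexp τ ^ j * Complex.exp (2 * Real.pi * Complex.I * z))

/-- A modular form of weight `k` for `SL(2,ℤ)`: a holomorphic function on the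
upper half-plane transforming with weight `k` under `SL(2,ℤ)` and bounded as `Im τ → ∞`. -/
def IsModularForm (k : ℕ) (G : ℂ → ℂ) : Prop :=
  DifferentiableOn ℂ G UHP ∧
  (∀ A : Matrix.SpecialLinearGroup (Fin 2) ℤ, ∀ τ ∈ UHP,
      G (((A 0 0 : ℤ) * τ + (A 0 1 : ℤ)) / ((A 1 0 : ℤ) * τ + (A 1 1 : ℤ))) =
        ((A 1 0 : ℤ) * τ + (A 1 1 : ℤ)) ^ k * G τ) ∧
  (∃ C : ℝ, ∀ τ ∈ UHP, 1 ≤ τ.im → ‖G τ‖ ≤ C)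

/-- All factors in the defining double product of the elliptic gamma function are nonzero. -/
def EGFactorsNeZero (z τ σ : ℂ) : Prop :=
  ∀ j ℓ : ℕ,
    (1 - qexp τ ^ (j + 1) * qexp σ ^ (ℓ + 1) * Complex.exp (-(2 * Real.pi * Complex.I) * z)) ≠ 0 ∧
    (1 - qexp τ ^ j * qexp σ ^ ℓ * Complex.exp (2 * Real.pi * Complex.I * z)) ≠ 0


lemma qexp_norm_lt {τ : ℂ} (h : τ ∈ UHP) : ‖qexp τ‖ < 1 := by
  have h' : 0 < τ.im := h
  have : (2 * (Real.pi:ℂ) * Complex.I * τ).re = -(2 * Real.pi * τ.im) := by simp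
  rw [qexp, Complex.norm_exp, this, Real.exp_lt_one_iff]
  have := Real.pi_pos
  have : 0 < 2 * Real.pi * τ.im := by positivity
  linarith

lemma qexp_norm_le {τ : ℂ} (h : 1 ≤ τ.im) : ‖qexp τ‖ ≤ ‖qexp Complex.I‖ := by
  have h1 : (2 * (Real.pi:ℂ) * Complex.I * τ).re = -(2 * Real.pi * τ.im) := by simp
  have h2 : (2 * (Real.pi:ℂ) * Complex.I * Complex.I).re = -(2 * Real.pi) := by simp
  rw [qexp, qexp, Complex.norm_exp, Complex.norm_exp, h1, h2, Real.exp_le_exp]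
  nlinarith [Real.pi_pos]

lemma qexp_surj {q : ℂ} (h0 : q ≠ 0) (h1 : ‖q‖ < 1) : ∃ τ ∈ UHP, qexp τ = q := by
  refine ⟨Complex.log q / (2 * Real.pi * Complex.I), ?_, ?_⟩
  · have hpi := Real.pi_pos
    have : Complex.log q / (2 * Real.pi * Complex.I)
        = -(Complex.I * Complex.log q) * ((1 / (2 * Real.pi) : ℝ) : ℂ) := by
      have : (Real.pi : ℂ) ≠ 0 := by exact_mod_cast hpi.ne'
      push_cast
      field_simp
      simp
    have hl : Real.log ‖q‖ < 0 := Real.log_neg (norm_pos_iff.2 h0) h1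
    show 0 < Complex.im _
    rw [this, Complex.im_mul_ofReal]
    simp only [Complex.neg_im, Complex.mul_im, Complex.I_re, Complex.I_im, Complex.log_re]
    apply mul_pos
    · linarith
    · positivity
  · rw [qexp, mul_div_cancel₀, Complex.exp_log h0]
    have := Real.pi_ne_zero
    simp [this]

lemma qexp_add (τ σ : ℂ) : qexp (τ + σ) = qexp τ * qexp σ := by
  rw [qexp, mul_add, Complex.exp_add]; rfl

lemma qexp_add_one (τ : ℂ) : qexp (τ + 1) = qexp τ := by
  rw [qexp_add]; simp [qexp]

lemma one_var (c : ℕ → ℂ)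
    (h : ∀ q : ℂ, q ≠ 0 → ‖q‖ < 1 → HasSum (fun n => c n * q ^ n) 0) : ∀ n, c n = 0 := by
  intro n
  induction n using Nat.strong_induction_on with
  | _ n ih =>
  by_contra hn
  -- the shifted series
  have h2 : ∀ q : ℂ, q ≠ 0 → ‖q‖ < 1 → HasSum (fun j => c (j + n) * q ^ j) 0 := by
    intro q h0 h1
    have := (hasSum_nat_add_iff' n).2 (h q h0 h1)
    rw [Finset.sum_eq_zero (fun i hi => by rw [ih i (Finset.mem_range.1 hi), zero_mul]),
      sub_zero] at this
    have := this.mul_left ((q ^ n)⁻¹)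
    rw [mul_zero] at this
    refine this.congr_fun ?_ |> id
    intro j
    field_simp
    ring
  have hs := (h2 (1/2) (by norm_num) (by norm_num)).summable.norm
  -- bound
  have hs' := (summable_nat_add_iff 1).2 hs
  have key : ∀ q : ℂ, q ≠ 0 → ‖q‖ < 1/2 →
      ‖c n‖ ≤ ‖q‖ * (2 * ∑' j, ‖c (j + 1 + n) * (1/2 : ℂ) ^ (j+1)‖) := by
    intro q h0 h1
    have h3 := (hasSum_nat_add_iff' 1).2 (h2 q h0 (by linarith))
    simp only [Finset.range_one, Finset.sum_singleton, zero_add, pow_zero, mul_one, zero_sub] at h3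
    rw [← norm_neg, ← h3.tsum_eq, ← tsum_mul_left, ← tsum_mul_left]
    refine tsum_of_norm_bounded ((hs'.mul_left 2).mul_left ‖q‖).hasSum ?_
    intro j
    rw [norm_mul, norm_mul, norm_pow, norm_pow, pow_succ, pow_succ]
    have : ‖(1/2 : ℂ)‖ = 1/2 := by norm_num
    rw [this]
    have hp : ‖q‖ ^ j ≤ (1/2) ^ j := pow_le_pow_left₀ (norm_nonneg _) h1.le _
    calc ‖c (j+1+n)‖ * (‖q‖ ^ j * ‖q‖) ≤ ‖c (j+1+n)‖ * ((1/2) ^ j * ‖q‖) := by gcongr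
      _ = _ := by ring
  set M := 2 * ∑' j, ‖c (j + 1 + n) * (1/2 : ℂ) ^ (j+1)‖ with hM
  have hM0 : 0 ≤ M := by
    apply mul_nonneg (by norm_num); exact tsum_nonneg (fun _ => norm_nonneg _)
  have hc : 0 < ‖c n‖ := norm_pos_iff.2 hn
  let t : ℝ := min (1/4) (‖c n‖ / (2 * (M + 1)))
  have ht : 0 < t := by simp only [t]; positivity
  have := key (t : ℂ) (by exact_mod_cast ht.ne') (by
    rw [Complex.norm_real, Real.norm_of_nonneg ht.le]
    exact lt_of_le_of_lt (min_le_left _ _) (by norm_num))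
  rw [Complex.norm_real, Real.norm_of_nonneg ht.le] at this
  have h4 : t * (2 * (M + 1)) ≤ ‖c n‖ := by
    rw [← le_div_iff₀ (by positivity)]; exact min_le_right _ _
  nlinarith

lemma two_var (b : ℕ → ℕ → ℂ)
    (h : ∀ τ ∈ UHP, ∀ σ ∈ UHP,
      HasSum (fun p : ℕ × ℕ => b p.1 p.2 * qexp τ ^ p.1 * qexp σ ^ p.2) 0) :
    ∀ n m, b n m = 0 := by
  intro n
  apply one_var
  intro r hr0 hr1
  obtain ⟨σ, hσ, rfl⟩ := qexp_surj hr0 hr1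
  have hsum : ∀ τ ∈ UHP, ∀ n, Summable (fun m => b n m * qexp σ ^ m) := by
    intro τ hτ n
    have h1 := (h τ hτ σ hσ).summable.comp_injective (i := fun m : ℕ => (n, m))
      (fun x y hxy => by simpa using hxy)
    have h2 := h1.mul_left ((qexp τ ^ n)⁻¹)
    refine h2.congr ?_
    intro m
    have : qexp τ ≠ 0 := Complex.exp_ne_zero _
    simp only [Function.comp]
    field_simp
  have hI : Complex.I ∈ UHP := by simp [UHP]
  have := one_var (fun n => ∑' m, b n m * qexp σ ^ m) (by
    intro q h0 h1
    obtain ⟨τ, hτ, rfl⟩ := qexp_surj h0 h1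
    refine (h τ hτ σ hσ).prod_fiberwise ?_
    intro n
    have := (hsum τ hτ n).hasSum.mul_right (qexp τ ^ n)
    refine this.congr_fun ?_ |> id
    intro m
    ring) n
  have h3 := (hsum _ hI n).hasSum
  rwa [show ∑' m, b n m * qexp σ ^ m = 0 from this] at h3

lemma coeff_anti (Z : ℂ → ℂ → ℂ) (a : ℕ → ℕ → ℂ)
    (hexp : ∀ τ ∈ UHP, ∀ σ ∈ UHP,
      HasSum (fun p : ℕ × ℕ => a p.1 p.2 * qexp τ ^ p.1 * qexp σ ^ p.2) (Z τ σ))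
    (hanti : ∀ τ ∈ UHP, ∀ σ ∈ UHP, Z τ σ = -Z σ τ) (n m : ℕ) : a n m = - a m n := by
  have := two_var (fun n m => a n m + a m n) (by
    intro τ hτ σ hσ
    have h1 := hexp τ hτ σ hσ
    have h2 := (Equiv.prodComm ℕ ℕ).hasSum_iff.2 (hexp σ hσ τ hτ)
    have h3 := h1.add h2
    rw [hanti τ hτ σ hσ, neg_add_cancel] at h3
    convert! h3 using 2 with p
    simp
    ring) n m
  exact eq_neg_of_add_eq_zero_left this

lemma coeff_rel (Z : ℂ → ℂ → ℂ) (a : ℕ → ℕ → ℂ)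
    (hexp : ∀ τ ∈ UHP, ∀ σ ∈ UHP,
      HasSum (fun p : ℕ × ℕ => a p.1 p.2 * qexp τ ^ p.1 * qexp σ ^ p.2) (Z τ σ))
    (h3a : ∀ τ ∈ UHP, ∀ σ ∈ UHP, Z τ σ = Z τ (τ + σ) + Z (τ + σ) σ) (n m : ℕ) :
    a n m = (if m ≤ n then a (n - m) m else 0) + (if n ≤ m then a n (m - n) else 0) := by
  have := two_var (fun n m => a n m -
      ((if m ≤ n then a (n - m) m else 0) + (if n ≤ m then a n (m - n) else 0))) (by
    intro τ hτ σ hσ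
    have hs : τ + σ ∈ UHP := by
      have h1 : 0 < τ.im := hτ
      have h2 : 0 < σ.im := hσ
      show 0 < (τ + σ).im
      rw [Complex.add_im]; linarith
    have h1 := hexp τ hτ σ hσ
    have h2 : HasSum (fun p : ℕ × ℕ => (if p.2 ≤ p.1 then a (p.1 - p.2) p.2 else 0)
        * qexp τ ^ p.1 * qexp σ ^ p.2) (Z τ (τ + σ)) := by
      have hi : Function.Injective (fun p : ℕ × ℕ => (p.1 + p.2, p.2)) := by
        rintro ⟨x, y⟩ ⟨z, w⟩ h
        simp only [Prod.mk.injEq] at h ⊢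
        omega
      rw [← hi.hasSum_iff]
      · convert! hexp τ hτ _ hs using 2 with p
        simp [qexp_add]
        ring
      · rintro ⟨x, y⟩ h
        rw [if_neg]
        · simp
        · intro hxy
          exact h ⟨(x - y, y), by simp at hxy ⊢; omega⟩
    have h3 : HasSum (fun p : ℕ × ℕ => (if p.1 ≤ p.2 then a p.1 (p.2 - p.1) else 0)
        * qexp τ ^ p.1 * qexp σ ^ p.2) (Z (τ + σ) σ) := by
      have hi : Function.Injective (fun p : ℕ × ℕ => (p.1, p.1 + p.2)) := by
        rintro ⟨x, y⟩ ⟨z, w⟩ h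
        simp only [Prod.mk.injEq] at h ⊢
        omega
      rw [← hi.hasSum_iff]
      · convert! hexp _ hs σ hσ using 2 with p
        simp [qexp_add]
        ring
      · rintro ⟨x, y⟩ h
        rw [if_neg]
        · simp
        · intro hxy
          exact h ⟨(x, y - x), by simp at hxy ⊢; omega⟩
    have h4 := h1.sub (h2.add h3)
    rw [← h3a τ hτ σ hσ, sub_self] at h4
    convert! h4 using 2 with p
    ring) n m
  exact sub_eq_zero.1 this

lemma coeff_zero (a : ℕ → ℕ → ℂ) (h1 : ∀ n m, a n m = - a m n)
    (h2 : ∀ n m, a n m = (if m ≤ n then a (n - m) m else 0) + (if n ≤ m then a n (m - n) else 0)) :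
    ∀ N n m, n + m ≤ N → 0 < n → 0 < m → a n m = 0 := by
  intro N
  induction N with
  | zero => intro n m; omega
  | succ N ih =>
    intro n m h hn hm
    rcases lt_trichotomy n m with hlt | rfl | hlt
    · rw [h2, if_neg (by omega), if_pos (by omega), ih n (m - n) (by omega) hn (by omega)]; simp
    · exact self_eq_neg.1 (h1 n n)
    · rw [h2, if_pos (by omega), if_neg (by omega), ih (n - m) m (by omega) (by omega) hm]; simp

lemma modular_of_gens (k : ℕ) (G : ℂ → ℂ)
    (hT : ∀ τ ∈ UHP, G (τ + 1) = G τ) (hS : ∀ τ ∈ UHP, G (-1 / τ) = τ ^ k * G τ)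
    (A : Matrix.SpecialLinearGroup (Fin 2) ℤ) (τ : ℂ) (hτ : τ ∈ UHP) :
    G (((A 0 0 : ℤ) * τ + (A 0 1 : ℤ)) / ((A 1 0 : ℤ) * τ + (A 1 1 : ℤ))) =
        ((A 1 0 : ℤ) * τ + (A 1 1 : ℤ)) ^ k * G τ := by
  let f : UpperHalfPlane → ℂ := fun z => G z
  open scoped ModularForm in
  have key : f ∣[(k : ℤ)] A = f := by
    have hA : A ∈ Subgroup.closure {ModularGroup.S, ModularGroup.T} := by
      rw [SpecialLinearGroup.SL2Z_generators]; trivial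
    induction hA using Subgroup.closure_induction with
    | mem x hx =>
      ext z
      rw [ModularForm.slash_action_eq'_iff]
      rcases hx with rfl | rfl
      · have := hS z z.im_pos
        simp only [f, UpperHalfPlane.coe_specialLinearGroup_apply]
        simpa [ModularGroup.S] using this
      · have := hT z z.im_pos
        simp only [f, UpperHalfPlane.coe_specialLinearGroup_apply]
        simpa [ModularGroup.T] using this
    | one => simp
    | mul x y _ _ hx hy => rw [SlashAction.slash_mul, hx, hy]
    | inv x _ hx =>
      conv_lhs => rw [← hx]
      rw [← SlashAction.slash_mul, mul_inv_cancel, SlashAction.slash_one]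
  have := (ModularForm.slash_action_eq'_iff k f A ⟨τ, hτ⟩).1 (congrFun key _)
  simp only [f, UpperHalfPlane.coe_specialLinearGroup_apply] at this
  simpa using this

lemma h_formula (k : ℕ) (hk : 0 < k) (h : ℂ → ℂ)
    (hh : ∀ τ ∈ UHP, ∀ ρ ∈ UHP, τ * ρ ∈ UHP → h (τ * ρ) = h τ + (τ ^ k)⁻¹ * h ρ) :
    ∃ c : ℂ, ∀ τ ∈ UHP, h τ = c * (1 - (τ ^ k)⁻¹) := by
  have hne : ∀ τ : ℂ, 1 < ‖τ‖ → 1 - (τ ^ k)⁻¹ ≠ 0 := by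
    intro τ hτ h0
    have h1 : τ ^ k = 1 := by
      rw [← inv_inv (τ ^ k), ← sub_eq_zero.1 h0, inv_one]
    have h2 : ‖τ‖ ^ k = 1 := by rw [← norm_pow, h1, norm_one]
    exact (one_lt_pow₀ hτ hk.ne').ne' h2
  have hsym : ∀ τ ∈ UHP, ∀ ρ ∈ UHP, τ * ρ ∈ UHP →
      h τ * (1 - (ρ ^ k)⁻¹) = h ρ * (1 - (τ ^ k)⁻¹) := by
    intro τ hτ ρ hρ hm
    have h1 := hh τ hτ ρ hρ hm
    have h2 := hh ρ hρ τ hτ (by rwa [mul_comm])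
    rw [mul_comm ρ τ, h1] at h2
    linear_combination h2
  have h2I : (2 * Complex.I) ∈ UHP := by simp [UHP]
  have hn2 := hne (2 * Complex.I) (by simp)
  refine ⟨h (2 * Complex.I) / (1 - ((2 * Complex.I) ^ k)⁻¹), ?_⟩
  intro ρ hρ
  have hρ' : 0 < ρ.im := hρ
  obtain ⟨t, ht0, ht⟩ : ∃ t : ℝ, 1 < t ∧ 0 < t * ρ.im + ρ.re := by
    refine ⟨2 + |ρ.re| / ρ.im, ?_, ?_⟩
    · have : 0 ≤ |ρ.re| / ρ.im := by positivity
      linarith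
    · rw [add_mul, div_mul_cancel₀ _ hρ'.ne']
      have := neg_abs_le ρ.re
      linarith
  let τ : ℂ := ⟨t, 1⟩
  have hτ : τ ∈ UHP := by simp [UHP, τ]
  have hτn : 1 < ‖τ‖ := by
    refine lt_of_lt_of_le ht0 ((le_abs_self t).trans (Complex.abs_re_le_norm τ))
  have e1 := hsym τ hτ ρ hρ (by simp only [UHP, Set.mem_ofPred_eq, Complex.mul_im, τ]; linarith)
  have e2 := hsym τ hτ _ h2I (by simp [UHP, Complex.mul_im, τ]; linarith)
  have h3 := hne τ hτn
  rw [div_mul_eq_mul_div, eq_div_iff hn2]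
  apply mul_right_cancel₀ h3
  linear_combination (1 - (ρ ^ k)⁻¹) * e2 - (1 - ((2 * Complex.I) ^ k)⁻¹) * e1

/-- An antisymmetric holomorphic function on `H × H` with an absolutely
convergent double `q`-expansion which satisfies the two three-term relations is a
difference `G(τ) - G(σ)` of a modular form `G` of weight `k`. -/
theorem three_term_relations_imply_difference_of_modular_form
    (k : ℕ) (hk : 0 < k) (hke : Even k) (Z : ℂ → ℂ → ℂ)
    (hol : DifferentiableOn ℂ (fun p : ℂ × ℂ => Z p.1 p.2) (UHP ×ˢ UHP))
    (a : ℕ → ℕ → ℂ)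
    (hexp : ∀ τ ∈ UHP, ∀ σ ∈ UHP,
      Summable (fun p : ℕ × ℕ => ‖a p.1 p.2 * qexp τ ^ p.1 * qexp σ ^ p.2‖) ∧
      HasSum (fun p : ℕ × ℕ => a p.1 p.2 * qexp τ ^ p.1 * qexp σ ^ p.2) (Z τ σ))
    (hanti : ∀ τ ∈ UHP, ∀ σ ∈ UHP, Z τ σ = -Z σ τ)
    (h3a : ∀ τ ∈ UHP, ∀ σ ∈ UHP, Z τ σ = Z τ (τ + σ) + Z (τ + σ) σ)
    (h3b : ∀ τ ∈ UHP, ∀ σ ∈ UHP, σ / τ ∈ UHP →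
      Z τ σ = τ ^ (-(k : ℤ)) * Z (-1 / τ) (σ / τ) +
        σ ^ (-(k : ℤ)) * Z (-(τ / σ)) (-1 / σ)) :
    ∃ G : ℂ → ℂ, IsModularForm k G ∧ ∀ τ ∈ UHP, ∀ σ ∈ UHP, Z τ σ = G τ - G σ := by
  have hexp2 := fun τ hτ σ hσ => (hexp τ hτ σ hσ).2
  have hI : Complex.I ∈ UHP := by simp [UHP]
  have ha := coeff_anti Z a hexp2 hanti
  have hr := coeff_rel Z a hexp2 h3a
  have hz : ∀ n m, 0 < n → 0 < m → a n m = 0 := fun n m =>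
    coeff_zero a ha hr (n + m) n m le_rfl
  have h00 : a 0 0 = 0 := self_eq_neg.1 (ha 0 0)
  have hinj1 : Function.Injective (fun n : ℕ => (n, 0)) := fun x y h => by simpa using h
  have hinj2 : Function.Injective (fun n : ℕ => (0, n)) := fun x y h => by simpa using h
  have hsn : ∀ τ ∈ UHP, Summable (fun n => ‖a n 0 * qexp τ ^ n‖) := by
    intro τ hτ
    have := (hexp τ hτ _ hI).1.comp_injective hinj1
    simpa [Function.comp_def] using this
  let g : ℂ → ℂ := fun τ => ∑' n, a n 0 * qexp τ ^ n
  have hg : ∀ τ ∈ UHP, HasSum (fun n => a n 0 * qexp τ ^ n) (g τ) :=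
    fun τ hτ => (hsn τ hτ).of_norm.hasSum
  have hZ : ∀ τ ∈ UHP, ∀ σ ∈ UHP, Z τ σ = g τ - g σ := by
    intro τ hτ σ hσ
    refine (hexp2 τ hτ σ hσ).unique ?_
    have h1 : HasSum (fun p : ℕ × ℕ => if p.2 = 0 then a p.1 0 * qexp τ ^ p.1 else 0) (g τ) := by
      rw [← hinj1.hasSum_iff]
      · simpa [Function.comp_def] using hg τ hτ
      · rintro ⟨x, y⟩ h
        rw [if_neg]
        rintro rfl
        exact h ⟨x, rfl⟩
    have h2 : HasSum (fun p : ℕ × ℕ => if p.1 = 0 then a p.2 0 * qexp σ ^ p.2 else 0) (g σ) := by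
      rw [← hinj2.hasSum_iff]
      · simpa [Function.comp_def] using hg σ hσ
      · rintro ⟨x, y⟩ h
        rw [if_neg]
        rintro rfl
        exact h ⟨y, rfl⟩
    convert! h1.sub h2 using 2 with p
    obtain ⟨x, y⟩ := p
    rcases Nat.eq_zero_or_pos x with rfl | hx
    · rcases Nat.eq_zero_or_pos y with rfl | hy
      · simp [h00]
      · simp [hy.ne', ha 0 y]
    · rcases Nat.eq_zero_or_pos y with rfl | hy
      · simp [hx.ne']
      · simp [hx.ne', hy.ne', hz x y hx hy]
  have hne : ∀ τ ∈ UHP, τ ≠ 0 := by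
    rintro τ hτ rfl
    simp [UHP] at hτ
  have hinv : ∀ τ ∈ UHP, -1 / τ ∈ UHP := by
    intro τ hτ
    have h' : 0 < τ.im := hτ
    have h0 : 0 < Complex.normSq τ := Complex.normSq_pos.2 (hne τ hτ)
    show 0 < (-1 / τ).im
    have : -1 / τ = -τ⁻¹ := by ring
    rw [this, Complex.neg_im, Complex.inv_im, neg_div, neg_neg]
    positivity
  obtain ⟨c, hc⟩ := h_formula k hk (fun τ => (τ ^ k)⁻¹ * g (-1 / τ) - g τ) (by
    intro τ hτ ρ hρ hm
    have t0 := hne τ hτ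
    have r0 := hne ρ hρ
    have hq : τ * ρ / τ = ρ := by field_simp
    have hq2 : -(τ / (τ * ρ)) = -1 / ρ := by field_simp
    have h1 := h3b τ hτ (τ * ρ) hm (by rwa [hq])
    rw [hq, hq2, hZ τ hτ _ hm, hZ _ (hinv τ hτ) _ hρ, hZ _ (hinv ρ hρ) _ (hinv _ hm)] at h1
    simp only [zpow_neg, zpow_natCast] at h1
    have e : ((τ * ρ) ^ k)⁻¹ = (τ ^ k)⁻¹ * (ρ ^ k)⁻¹ := by rw [mul_pow, mul_inv]
    rw [e] at h1 ⊢
    linear_combination h1)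
  refine ⟨fun τ => g τ + c, ⟨?_, ?_, ?_⟩, ?_⟩
  · have h1 : DifferentiableOn ℂ (fun τ => Z τ Complex.I + (g Complex.I + c)) UHP := by
      apply DifferentiableOn.add_const
      exact hol.comp (f := fun τ : ℂ => (τ, Complex.I)) (by fun_prop) (fun τ hτ => ⟨hτ, hI⟩)
    refine h1.congr ?_
    intro τ hτ
    simp only [hZ τ hτ _ hI]
    ring
  · intro A τ hτ
    refine modular_of_gens k (fun τ => g τ + c) ?_ ?_ A τ hτ
    · intro τ _
      simp [g, qexp_add_one]
    · intro τ hτ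
      have h1 := hc τ hτ
      have h0 : τ ^ k ≠ 0 := pow_ne_zero _ (hne τ hτ)
      generalize g (-1 / τ) = x at h1 ⊢
      field_simp at h1
      linear_combination h1
  · refine ⟨(∑' n, ‖a n 0 * qexp Complex.I ^ n‖) + ‖c‖, ?_⟩
    intro τ hτ h1
    refine (norm_add_le _ _).trans (add_le_add_left ?_ _)
    refine tsum_of_norm_bounded (hsn _ hI).hasSum ?_
    intro n
    rw [norm_mul, norm_mul, norm_pow, norm_pow]
    have := qexp_norm_le h1
    gcongr
  · intro τ hτ σ hσ
    rw [hZ τ hτ σ hσ]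
    ring
end

section
/- Let k ≥ 4 be an integer. Then the elliptic zeta value obeys the modular three-term relation Z_k(τ,σ) = τ^{−k} Z_k(−1/τ, σ/τ) + (−σ)^{−k} Z_k(−τ/σ, −1/σ) for all τ, σ ∈ H such that σ/τ ∈ H. -/
open Complex Filter Topology

lemma ez_congr {β : Type*} {f g : β → ℂ} {a : ℂ} (h : ∀ b, f b = g b) (hg : HasSum g a) :
    HasSum f a := by
  rw [show f = g from funext h]; exact hg

lemma ez_bound (τ σ : ℂ) (hτ : 0 < τ.im) (hσ : 0 < σ.im) :
    ∃ K : ℝ, 0 < K ∧ ∀ (a b : ℕ) (n : ℤ),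
      ((a : ℝ) + 1) * ((b : ℝ) + 1) * (|(n : ℝ)| + 1) ≤
        K * ‖(a : ℂ) * τ + ((b : ℂ) + 1) * σ + (n : ℂ)‖ ^ 3 := by
  obtain ⟨δ, hδ, h1, h2⟩ : ∃ δ : ℝ, 0 < δ ∧ δ ≤ τ.im ∧ δ ≤ σ.im :=
    ⟨min τ.im σ.im, lt_min hτ hσ, min_le_left _ _, min_le_right _ _⟩
  obtain ⟨T, hT1, hT2⟩ : ∃ T : ℝ, ‖τ‖ ≤ T ∧ ‖σ‖ ≤ T :=
    ⟨max ‖τ‖ ‖σ‖, le_max_left _ _, le_max_right _ _⟩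
  have hT : 0 ≤ T := (norm_nonneg _).trans hT1
  refine ⟨δ⁻¹ * δ⁻¹ * (1 + T * δ⁻¹ + δ⁻¹), by positivity, fun a b n => ?_⟩
  set z : ℂ := (a : ℂ) * τ + ((b : ℂ) + 1) * σ + (n : ℂ) with hz
  have ha : (0 : ℝ) ≤ a := Nat.cast_nonneg a
  have hb : (0 : ℝ) ≤ b := Nat.cast_nonneg b
  have him : z.im = a * τ.im + (b + 1) * σ.im := by
    simp [hz]
  have hs : δ * (a + b + 1) ≤ ‖z‖ := by
    have h3 : z.im ≤ ‖z‖ := (le_abs_self _).trans (Complex.abs_im_le_norm z)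
    rw [him] at h3
    nlinarith
  have hs' : (a + b + 1 : ℝ) ≤ δ⁻¹ * ‖z‖ := by
    rw [← div_eq_inv_mul, le_div_iff₀ hδ]; linarith
  have hn : |(n : ℝ)| ≤ ‖z‖ + T * (a + b + 1) := by
    have e : (n : ℂ) = z - ((a : ℂ) * τ + ((b : ℂ) + 1) * σ) := by rw [hz]; ring
    have e1 : |(n : ℝ)| = ‖(n : ℂ)‖ := by simp
    have e2 : ‖(a : ℂ) * τ + ((b : ℂ) + 1) * σ‖ ≤ a * T + (b + 1) * T := by
      refine (norm_add_le _ _).trans ?_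
      have e3 : ‖((b : ℂ) + 1)‖ = b + 1 := by
        have := Complex.norm_natCast (b + 1)
        push_cast at this; exact this
      rw [norm_mul, norm_mul, e3, Complex.norm_natCast]
      gcongr
    rw [e1, e]
    refine (norm_sub_le _ _).trans ?_
    linarith
  have hzn : 0 ≤ ‖z‖ := norm_nonneg z
  have hn' : |(n : ℝ)| + 1 ≤ (1 + T * δ⁻¹ + δ⁻¹) * ‖z‖ := by
    have := mul_le_mul_of_nonneg_left hs' hT
    nlinarith
  calc ((a : ℝ) + 1) * ((b : ℝ) + 1) * (|(n : ℝ)| + 1)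
      ≤ (δ⁻¹ * ‖z‖) * (δ⁻¹ * ‖z‖) * ((1 + T * δ⁻¹ + δ⁻¹) * ‖z‖) := by
        gcongr <;> linarith
    _ = _ := by ring

lemma ez_summable_nat {s : ℝ} (hs : 1 < s) : Summable fun n : ℕ => ((n : ℝ) + 1) ^ (-s) := by
  have := (summable_nat_add_iff 1).2 (Real.summable_nat_rpow.2 (show -s < -1 by linarith))
  simpa using this

lemma ez_summable_int {s : ℝ} (hs : 1 < s) : Summable fun n : ℤ => (|(n : ℝ)| + 1) ^ (-s) := by
  refine Summable.of_nat_of_neg ?_ ?_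
  · simpa using ez_summable_nat hs
  · simpa using ez_summable_nat hs

lemma ez_summable (k : ℕ) (hk : 4 ≤ k) (τ σ : ℂ) (hτ : 0 < τ.im) (hσ : 0 < σ.im) :
    Summable fun p : (ℕ × ℕ) × ℤ =>
      (((p.1.1 : ℂ) * τ + ((p.1.2 : ℂ) + 1) * σ + (p.2 : ℂ)) ^ k)⁻¹ := by
  obtain ⟨K, hK, h⟩ := ez_bound τ σ hτ hσ
  have hk' : (4 : ℝ) ≤ k := by exact_mod_cast hk
  have hs : (1 : ℝ) < k / 3 := by linarith
  have S := ((ez_summable_nat hs).mul_of_nonneg (ez_summable_nat hs)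
    (fun _ => by positivity) (fun _ => by positivity)).mul_of_nonneg (ez_summable_int hs)
    (fun _ => by positivity) (fun _ => by positivity)
  refine Summable.of_norm_bounded (S.mul_left (K ^ (k / 3 : ℝ))) ?_
  rintro ⟨⟨a, b⟩, n⟩
  have h1 := h a b n
  simp only
  set z : ℂ := (a : ℂ) * τ + ((b : ℂ) + 1) * σ + (n : ℂ) with hz
  have hpos : 0 < ((a : ℝ) + 1) * ((b : ℝ) + 1) * (|(n : ℝ)| + 1) := by positivity
  have h2 : (((a : ℝ) + 1) * ((b : ℝ) + 1) * (|(n : ℝ)| + 1)) ^ (k / 3 : ℝ) ≤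
      K ^ (k / 3 : ℝ) * ‖z‖ ^ k := by
    refine (Real.rpow_le_rpow hpos.le h1 (by positivity)).trans_eq ?_
    rw [Real.mul_rpow hK.le (by positivity)]
    congr 1
    rw [← Real.rpow_natCast, ← Real.rpow_mul (norm_nonneg _), ← Real.rpow_natCast]
    congr 1
    push_cast; ring
  have h3 : 0 < (((a : ℝ) + 1) * ((b : ℝ) + 1) * (|(n : ℝ)| + 1)) ^ (k / 3 : ℝ) :=
    Real.rpow_pos_of_pos hpos _
  rw [← Real.mul_rpow (by positivity) (by positivity),
    ← Real.mul_rpow (by positivity) (by positivity), Real.rpow_neg hpos.le, norm_inv, norm_pow]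
  have hKp : 0 < K ^ (k / 3 : ℝ) := Real.rpow_pos_of_pos hK _
  have hz0 : 0 < ‖z‖ ^ k := by
    by_contra hh
    nlinarith
  rw [← div_eq_mul_inv, le_div_iff₀ h3, inv_mul_le_iff₀ hz0]
  linarith

lemma ez_qnorm (τ : ℂ) (hτ : 0 < τ.im) : ‖qexp τ‖ < 1 := by
  rw [qexp, Complex.norm_exp]
  rw [Real.exp_lt_one_iff]
  have : (2 * (Real.pi : ℂ) * Complex.I * τ).re = -(2 * Real.pi * τ.im) := by simp
  rw [this]
  have := Real.pi_pos
  simp only [Left.neg_neg_iff]; positivity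

/-- absolute summability of the triple `q`-series -/
lemma ez_qsummable (m : ℕ) (q r : ℂ) (hq : ‖q‖ < 1) (hr : ‖r‖ < 1) :
    Summable fun p : ℕ+ × (ℕ × ℕ) =>
      ((p.1 : ℕ) : ℂ) ^ m * (q ^ p.2.1 * r ^ (p.2.2 + 1)) ^ (p.1 : ℕ) := by
  have base : Summable fun p : ℕ × (ℕ × ℕ) =>
      ((p.1 : ℝ)  ^ m * ‖r‖ ^ p.1) * (‖q‖ ^ p.2.1 * ‖r‖ ^ p.2.2) :=
    (summable_pow_mul_geometric_of_norm_lt_one m (r := ‖r‖) (by simpa using hr)).mul_of_nonneg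
      ((summable_geometric_of_lt_one (norm_nonneg _) hq).mul_of_nonneg
        (summable_geometric_of_lt_one (norm_nonneg _) hr) (fun _ => by positivity)
        (fun _ => by positivity))
      (fun _ => by positivity) (fun _ => by positivity)
  have inj : Function.Injective (fun p : ℕ+ × (ℕ × ℕ) => ((p.1 : ℕ), p.2)) := by
    rintro ⟨a, b⟩ ⟨c, d⟩ h
    simp only [Prod.mk.injEq, PNat.coe_inj] at h
    simp [h]
  refine Summable.of_norm_bounded (base.comp_injective inj) ?_
  rintro ⟨j, a, b⟩
  have hj : 1 ≤ (j : ℕ) := j.pos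
  simp only [Function.comp, norm_mul, norm_pow, Complex.norm_natCast]
  rw [mul_assoc, mul_pow, ← pow_mul, ← pow_mul]
  have e1 : ‖q‖ ^ (a * (j : ℕ)) ≤ ‖q‖ ^ a :=
    pow_le_pow_of_le_one (norm_nonneg _) hq.le (by nlinarith)
  have e2 : ‖r‖ ^ ((b + 1) * (j : ℕ)) ≤ ‖r‖ ^ ((j : ℕ) + b) :=
    pow_le_pow_of_le_one (norm_nonneg _) hr.le (by nlinarith)
  calc (j : ℝ) ^ m * (‖q‖ ^ (a * (j : ℕ)) * ‖r‖ ^ ((b + 1) * (j : ℕ)))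
      ≤ (j : ℝ) ^ m * (‖q‖ ^ a * ‖r‖ ^ ((j : ℕ) + b)) := by gcongr
    _ = _ := by rw [pow_add]; ring

lemma ez_inner (q r : ℂ) (hq : ‖q‖ < 1) (hr : ‖r‖ < 1) (j : ℕ+) (c : ℂ) :
    HasSum (fun p : ℕ × ℕ => c * (q ^ p.1 * r ^ (p.2 + 1)) ^ (j : ℕ))
      (c * r ^ (j : ℕ) / ((1 - q ^ (j : ℕ)) * (1 - r ^ (j : ℕ)))) := by
  have hq' : ‖q ^ (j : ℕ)‖ < 1 := by
    rw [norm_pow]; exact pow_lt_one₀ (norm_nonneg _) hq j.ne_zero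
  have hr' : ‖r ^ (j : ℕ)‖ < 1 := by
    rw [norm_pow]; exact pow_lt_one₀ (norm_nonneg _) hr j.ne_zero
  have h := ((hasSum_geometric_of_norm_lt_one hq').mul (hasSum_geometric_of_norm_lt_one hr')
    (summable_mul_of_summable_norm (summable_geometric_of_lt_one (norm_nonneg _) hq' |>.congr
      (fun _ => by simp)) (summable_geometric_of_lt_one (norm_nonneg _) hr' |>.congr
      (fun _ => by simp)))).mul_left (c * r ^ (j : ℕ))
  rw [div_eq_mul_inv, mul_inv]
  refine ez_congr (fun p => ?_) h
  simp only [mul_pow, ← pow_mul]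
  ring

/-- one half of the elliptic zeta value -/
noncomputable def ezHalf (k : ℕ) (q r : ℂ) : ℂ :=
  ∑' j : ℕ+, (j : ℂ) ^ (k - 1) * r ^ (j : ℕ) / ((1 - q ^ (j : ℕ)) * (1 - r ^ (j : ℕ)))

lemma ezHalf_summable (k : ℕ) (q r : ℂ) (hq : ‖q‖ < 1) (hr : ‖r‖ < 1) :
    Summable fun j : ℕ+ =>
      (j : ℂ) ^ (k - 1) * r ^ (j : ℕ) / ((1 - q ^ (j : ℕ)) * (1 - r ^ (j : ℕ))) :=
  ((ez_qsummable (k - 1) q r hq hr).hasSum.prod_fiberwise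
    (fun j => ez_inner q r hq hr j (((j : ℕ) : ℂ) ^ (k - 1)))).summable

lemma ezHalf_hasSum (k : ℕ) (q r : ℂ) (hq : ‖q‖ < 1) (hr : ‖r‖ < 1) :
    HasSum (fun p : ℕ × ℕ => ∑' j : ℕ+, ((j : ℕ) : ℂ) ^ (k - 1) *
      (q ^ p.1 * r ^ (p.2 + 1)) ^ (j : ℕ)) (ezHalf k q r) := by
  have S := ez_qsummable (k - 1) q r hq hr
  have h1 := S.hasSum.prod_fiberwise (fun j => ez_inner q r hq hr j (((j : ℕ) : ℂ) ^ (k - 1)))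
  rw [ezHalf, h1.tsum_eq]
  have S' := (Equiv.prodComm (ℕ × ℕ) ℕ+).summable_iff.2 S
  have h2 := (Equiv.prodComm (ℕ × ℕ) ℕ+).hasSum_iff.2 S.hasSum
  exact h2.prod_fiberwise (fun p => (S'.prod_factor p).hasSum)

lemma ez_half_lattice (k : ℕ) (hk : 4 ≤ k) (τ σ : ℂ) (hτ : 0 < τ.im) (hσ : 0 < σ.im) :
    HasSum (fun p : (ℕ × ℕ) × ℤ =>
      (((p.1.1 : ℂ) * τ + ((p.1.2 : ℂ) + 1) * σ + (p.2 : ℂ)) ^ k)⁻¹)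
      ((-2 * Real.pi * Complex.I) ^ k / (Nat.factorial (k - 1) : ℂ) *
        ezHalf k (qexp τ) (qexp σ)) := by
  have S := ez_summable k hk τ σ hτ hσ
  have h1 := S.hasSum.prod_fiberwise (fun p => (S.prod_factor p).hasSum)
  have h2 := (ezHalf_hasSum k _ _ (ez_qnorm τ hτ) (ez_qnorm σ hσ)).mul_left
    ((-2 * Real.pi * Complex.I) ^ k / (Nat.factorial (k - 1) : ℂ))
  have e : (fun p : ℕ × ℕ => ∑' n : ℤ,
      (((p.1 : ℂ) * τ + ((p.2 : ℂ) + 1) * σ + (n : ℂ)) ^ k)⁻¹) =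
      fun p : ℕ × ℕ => (-2 * Real.pi * Complex.I) ^ k / (Nat.factorial (k - 1) : ℂ) *
        ∑' j : ℕ+, ((j : ℕ) : ℂ) ^ (k - 1) *
      (qexp τ ^ p.1 * qexp σ ^ (p.2 + 1)) ^ (j : ℕ) := by
    funext p
    obtain ⟨a, b⟩ := p
    have him : 0 < ((a : ℂ) * τ + ((b : ℂ) + 1) * σ).im := by
      have : ((a : ℂ) * τ + ((b : ℂ) + 1) * σ).im = a * τ.im + (b + 1) * σ.im := by simp
      rw [this]; positivity
    have := EisensteinSeries.qExpansion_identity_pnat (k := k - 1) (by omega) ⟨_, him⟩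
    rw [show k - 1 + 1 = k by omega] at this
    simp only [one_div] at this
    refine this.trans ?_
    congr 1
    refine tsum_congr fun j => ?_
    congr 2
    simp only [qexp, ← Complex.exp_nat_mul, ← Complex.exp_add]
    congr 1
    push_cast
    ring
  rw [h2.unique (ez_congr (fun p => (congrFun e p).symm) h1)]
  exact S.hasSum

/-- the weighted lattice summand -/
noncomputable def ezTerm (k : ℕ) (τ σ : ℂ) (p : ℤ × ℤ × ℤ) : ℂ :=
  (if 0 ≤ p.1 ∧ 0 < p.2.1 then (((p.1 : ℂ) * τ + (p.2.1 : ℂ) * σ + (p.2.2 : ℂ)) ^ k)⁻¹ else 0) -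
  (if p.1 < 0 ∧ p.2.1 ≤ 0 then (((p.1 : ℂ) * τ + (p.2.1 : ℂ) * σ + (p.2.2 : ℂ)) ^ k)⁻¹ else 0)

lemma ez_lattice (k : ℕ) (hk : 4 ≤ k) (τ σ : ℂ) (hτ : 0 < τ.im) (hσ : 0 < σ.im) :
    HasSum (ezTerm k τ σ) (ellipticZeta k τ σ) := by
  have hval : ellipticZeta k τ σ =
      ((-2 * Real.pi * Complex.I) ^ k / (Nat.factorial (k - 1) : ℂ) *
        ezHalf k (qexp τ) (qexp σ)) - (-1) ^ k *
      ((-2 * Real.pi * Complex.I) ^ k / (Nat.factorial (k - 1) : ℂ) *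
        ezHalf k (qexp σ) (qexp τ)) := by
    have s1 := ezHalf_summable k _ _ (ez_qnorm τ hτ) (ez_qnorm σ hσ)
    have s2 := ezHalf_summable k _ _ (ez_qnorm σ hσ) (ez_qnorm τ hτ)
    have e := s2.tsum_sub (s1.mul_left ((-1) ^ k))
    rw [tsum_mul_left] at e
    change _ = ezHalf k (qexp σ) (qexp τ) - (-1) ^ k * ezHalf k (qexp τ) (qexp σ) at e
    have e' : ellipticZeta k τ σ = -((2 * (Real.pi : ℂ) * Complex.I) ^ k /
        (Nat.factorial (k - 1) : ℂ)) *
        (ezHalf k (qexp σ) (qexp τ) - (-1) ^ k * ezHalf k (qexp τ) (qexp σ)) := by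
      rw [← e, ellipticZeta]
      congr 1
      refine tsum_congr fun j => ?_
      rw [mul_comm (1 - qexp σ ^ (j : ℕ))]
      ring
    have e3 : (-2 * (Real.pi : ℂ) * Complex.I) ^ k =
        (-1) ^ k * (2 * (Real.pi : ℂ) * Complex.I) ^ k := by
      rw [← mul_pow]; ring
    have e4 : ((-1 : ℂ) ^ k) * (-1) ^ k = 1 := by
      rw [← mul_pow]; simp
    rw [e', e3]
    linear_combination (-(2 * (Real.pi : ℂ) * Complex.I) ^ k /
        (Nat.factorial (k - 1) : ℂ) * ezHalf k (qexp σ) (qexp τ)) * (-e4)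
  rw [hval]
  refine HasSum.sub ?_ ?_
  · let g : (ℕ × ℕ) × ℤ → ℤ × ℤ × ℤ := fun p => ((p.1.1 : ℤ), (p.1.2 : ℤ) + 1, p.2)
    have hg : Function.Injective g := by
      rintro ⟨⟨a, b⟩, n⟩ ⟨⟨a', b'⟩, n'⟩ h
      simp only [g, Prod.mk.injEq] at h ⊢
      omega
    refine (hg.hasSum_iff ?_).1 ?_
    · rintro ⟨x, y, m⟩ hx
      refine if_neg fun hh => hx ⟨((x.toNat, (y - 1).toNat), m), ?_⟩
      simp only at hh
      simp only [g, Prod.mk.injEq]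
      refine ⟨?_, ?_, ?_⟩ <;> first | trivial | omega
    · refine ez_congr (fun p => ?_) (ez_half_lattice k hk τ σ hτ hσ)
      simp only [g, Function.comp]
      rw [if_pos (by omega)]
      push_cast
      rfl
  · let g : (ℕ × ℕ) × ℤ → ℤ × ℤ × ℤ := fun p => (-((p.1.2 : ℤ) + 1), -(p.1.1 : ℤ), -p.2)
    have hg : Function.Injective g := by
      rintro ⟨⟨a, b⟩, n⟩ ⟨⟨a', b'⟩, n'⟩ h
      simp only [g, Prod.mk.injEq] at h ⊢
      omega
    refine (hg.hasSum_iff ?_).1 ?_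
    · rintro ⟨x, y, m⟩ hx
      refine if_neg fun hh => hx ⟨(((-y).toNat, (-x - 1).toNat), -m), ?_⟩
      simp only at hh
      simp only [g, Prod.mk.injEq]
      refine ⟨?_, ?_, ?_⟩ <;> first | trivial | omega
    · refine ez_congr (fun p => ?_) ((ez_half_lattice k hk σ τ hσ hτ).mul_left ((-1) ^ k))
      simp only [g, Function.comp]
      rw [if_pos (by omega)]
      have e4 : ((-1 : ℂ) ^ k) = ((-1 : ℂ) ^ k)⁻¹ := by
        rw [← inv_pow]; norm_num
      rw [e4, ← mul_inv, ← mul_pow]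
      push_cast
      congr 2
      ring

/-- modular three-term relation for `Z_k`, `k ≥ 4`. -/
theorem ellipticZeta_modular_three_term
    (k : ℕ) (hk : 4 ≤ k) (τ σ : ℂ) (hτ : τ ∈ UHP) (hσ : σ ∈ UHP) (hστ : σ / τ ∈ UHP) :
    ellipticZeta k τ σ =
      τ ^ (-(k : ℤ)) * ellipticZeta k (-1 / τ) (σ / τ) +
      (-σ) ^ (-(k : ℤ)) * ellipticZeta k (-(τ / σ)) (-1 / σ) := by
  have hinv : ∀ z : ℂ, 0 < z.im → 0 < (-1 / z).im := by
    intro z hz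
    have hz0 : z ≠ 0 := by rintro rfl; simp at hz
    have : (-1 / z).im = z.im / Complex.normSq z := by
      rw [neg_div, one_div, Complex.neg_im, Complex.inv_im]; ring
    rw [this]
    exact div_pos hz (Complex.normSq_pos.2 hz0)
  have hτ0 : τ ≠ 0 := by rintro rfl; simp [UHP] at hτ
  have hσ0 : σ ≠ 0 := by rintro rfl; simp [UHP] at hσ
  have h3' : -(τ / σ) = -1 / (σ / τ) := by field_simp
  have h1 := ez_lattice k hk τ σ hτ hσ
  have h2 := (ez_lattice k hk _ _ (hinv τ hτ) hστ).mul_left (τ ^ (-(k : ℤ)))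
  have h3 := (ez_lattice k hk (-(τ / σ)) (-1 / σ) (h3' ▸ hinv _ hστ) (hinv σ hσ)).mul_left
    ((-σ) ^ (-(k : ℤ)))
  let e2 : ℤ × ℤ × ℤ ≃ ℤ × ℤ × ℤ :=
    { toFun := fun p => (-p.2.2, p.2.1, p.1)
      invFun := fun p => (p.2.2, p.2.1, -p.1)
      left_inv := fun p => by simp
      right_inv := fun p => by simp }
  let e3 : ℤ × ℤ × ℤ ≃ ℤ × ℤ × ℤ :=
    { toFun := fun p => (p.1, p.2.2, -p.2.1)
      invFun := fun p => (p.1, -p.2.2, p.2.1)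
      left_inv := fun p => by simp
      right_inv := fun p => by simp }
  refine h1.unique ?_
  refine ez_congr (fun p => ?_) ((e2.hasSum_iff.2 h2).add (e3.hasSum_iff.2 h3))
  obtain ⟨x, y, m⟩ := p
  simp only [Function.comp, e2, e3, ezTerm, Equiv.coe_fn_mk]
  have E2 : τ ^ (-(k : ℤ)) * ((((-m : ℤ) : ℂ) * (-1 / τ) + (y : ℂ) * (σ / τ) + (x : ℂ)) ^ k)⁻¹ =
      (((x : ℂ) * τ + (y : ℂ) * σ + (m : ℂ)) ^ k)⁻¹ := by
    rw [zpow_neg, zpow_natCast, ← mul_inv, ← mul_pow]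
    congr 2
    push_cast
    field_simp
    ring
  have E3 : (-σ) ^ (-(k : ℤ)) *
      (((x : ℂ) * (-(τ / σ)) + (m : ℂ) * (-1 / σ) + ((-y : ℤ) : ℂ)) ^ k)⁻¹ =
      (((x : ℂ) * τ + (y : ℂ) * σ + (m : ℂ)) ^ k)⁻¹ := by
    rw [zpow_neg, zpow_natCast, ← mul_inv, ← mul_pow]
    congr 2
    push_cast
    field_simp
    ring
  simp only [mul_sub, mul_ite, mul_zero, E2, E3]
  generalize (((x : ℂ) * τ + (y : ℂ) * σ + (m : ℂ)) ^ k)⁻¹ = F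
  by_cases hx : 0 ≤ x <;> by_cases hy : 0 < y <;> by_cases hm : 0 < m <;>
    simp [hx, hy, hm, not_lt.2, not_le.2, not_lt.1, not_le.1]
end

section
/- Suppose τ, σ, σ/τ ∈ H. Then there exist complex coefficients c_0, c_1, c_2, c_3 (rational functions of τ and σ with rational coefficients) such that, with Q(z) = c_3 z^3 + c_2 z^2 + c_1 z + c_0, the identity Γ(z/τ, −1/τ, σ/τ) = e^{iπ Q(z)} · Γ((z−τ)/σ, −τ/σ, −1/σ) · Γ(z, τ, σ) holds for all z ∈ ℂ for which all factors are nonzero. -/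
open Complex Filter Topology

/-- `ee z = e^{2πiz}`. -/
noncomputable def ee (z : ℂ) : ℂ := Complex.exp (2 * Real.pi * Complex.I * z)

lemma ee_add (a b : ℂ) : ee (a + b) = ee a * ee b := by
  unfold ee; rw [← Complex.exp_add]; ring_nf

lemma ee_ne_zero (a : ℂ) : ee a ≠ 0 := Complex.exp_ne_zero _

lemma ee_zero : ee 0 = 1 := by simp [ee]

lemma ee_eq_one_iff (a : ℂ) : ee a = 1 ↔ ∃ n : ℤ, a = n := by
  unfold ee
  rw [Complex.exp_eq_one_iff]
  have h : (2 * Real.pi * Complex.I : ℂ) ≠ 0 := by simp [Real.pi_ne_zero]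
  constructor
  · rintro ⟨n, hn⟩
    exact ⟨n, mul_left_cancel₀ h (by rw [hn]; ring)⟩
  · rintro ⟨n, hn⟩
    exact ⟨n, by rw [hn]; ring⟩

lemma ee_int (n : ℤ) : ee n = 1 := (ee_eq_one_iff _).2 ⟨n, rfl⟩

lemma ee_one : ee 1 = 1 := by simpa using ee_int 1

lemma ee_nat_mul (n : ℕ) (a : ℂ) : ee (n * a) = ee a ^ n := by
  unfold ee; rw [← Complex.exp_nat_mul]; ring_nf

lemma norm_ee_lt_one {t : ℂ} (ht : 0 < t.im) : ‖ee t‖ < 1 := by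
  unfold ee
  rw [Complex.norm_exp, Real.exp_lt_one_iff]
  simp
  positivity

@[fun_prop]
lemma differentiable_ee : Differentiable ℂ ee := by
  unfold ee; fun_prop

lemma hasDerivAt_ee (z : ℂ) : HasDerivAt ee (2 * Real.pi * Complex.I * ee z) z := by
  have := ((hasDerivAt_id z).const_mul (2 * Real.pi * Complex.I : ℂ)).cexp
  simp only [id, mul_one] at this
  unfold ee
  rw [mul_comm _ (Complex.exp _)]
  exact this

/-- The general product `∏ (1 - e(αᵢ + w))`. -/
noncomputable def PP {ι : Type*} (α : ι → ℂ) (w : ℂ) : ℂ := ∏' i, (1 - ee (α i + w))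

section PPlemmas
variable {ι : Type*} {α : ι → ℂ}

lemma PP_summable (h : Summable fun i => ‖ee (α i)‖) (w : ℂ) :
    Summable fun i => ‖-ee (α i + w)‖ := by
  simp only [norm_neg, ee_add, norm_mul]
  exact h.mul_right _

lemma PP_multipliable (h : Summable fun i => ‖ee (α i)‖) (w : ℂ) :
    Multipliable fun i => (1 - ee (α i + w)) := by
  simpa [sub_eq_add_neg] using multipliable_one_add_of_summable (PP_summable h w)

lemma PP_ne_zero (h : Summable fun i => ‖ee (α i)‖) (w : ℂ) (hw : ∀ i, ee (α i + w) ≠ 1) :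
    PP α w ≠ 0 := by
  have := tprod_one_add_ne_zero_of_summable (f := fun i => -ee (α i + w))
    (fun i => by
      have := hw i
      intro h0
      apply this
      linear_combination -h0) (PP_summable h w)
  simpa [PP, sub_eq_add_neg] using this

lemma PP_differentiable (h : Summable fun i => ‖ee (α i)‖) : Differentiable ℂ (PP α) := by
  intro w0
  obtain ⟨C, hC⟩ := (isCompact_closedBall w0 1).exists_bound_of_continuousOn
    (f := ee) (differentiable_ee.continuous.continuousOn)
  have key : DifferentiableOn ℂ (fun w => ∏' i, (1 + -ee (α i + w))) (Metric.ball w0 1) := by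
    have := Summable.hasProdLocallyUniformlyOn_one_add (f := fun i w => -ee (α i + w))
      (K := Metric.ball w0 1) Metric.isOpen_ball (h.mul_right C)
      (.of_forall fun i w hw => by
        rw [norm_neg, ee_add, norm_mul]
        exact mul_le_mul_of_nonneg_left (hC w (Metric.ball_subset_closedBall hw)) (norm_nonneg _))
      (fun i => by
        have : Continuous ee := differentiable_ee.continuous
        fun_prop)
    refine this.differentiableOn (.of_forall fun s => ?_) Metric.isOpen_ball
    simpa [Finset.prod_fn] using DifferentiableOn.finsetProd (fun _ _ ↦ by fun_prop)
  have := (key w0 (Metric.mem_ball_self one_pos)).differentiableAt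
    (Metric.isOpen_ball.mem_nhds (Metric.mem_ball_self one_pos))
  have e : PP α = fun w => ∏' i, (1 + -ee (α i + w)) := by
    funext w; simp [PP, sub_eq_add_neg]
  rw [e]; exact this

lemma PP_finite (h : Summable fun i => ‖ee (α i)‖) (w : ℂ) : {i | ee (α i + w) = 1}.Finite := by
  have h1 := (PP_summable h w).tendsto_cofinite_zero.eventually (gt_mem_nhds one_pos)
  rw [Filter.eventually_cofinite] at h1
  refine h1.subset fun i hi => ?_
  simp only [Set.mem_ofPred_eq] at hi ⊢
  simp [hi]

lemma factor_order (a w : ℂ) (h : ee (a + w) = 1) :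
    analyticOrderAt (fun z => 1 - ee (a + z)) w = 1 := by
  have hd : Differentiable ℂ (fun z => 1 - ee (a + z)) := by fun_prop
  apply (hd.analyticAt w).analyticOrderAt_eq_one_of_zero_deriv_ne_zero
  · simp [h]
  · have := ((hasDerivAt_ee (a + w)).comp_const_add a w).const_sub 1
    rw [this.deriv, h]
    simp [Real.pi_ne_zero]

lemma finprod_order (s : Finset ι) (w : ℂ) (hs : ∀ i ∈ s, ee (α i + w) = 1) :
    analyticOrderAt (fun z => ∏ i ∈ s, (1 - ee (α i + z))) w = s.card := by
  classical
  induction s using Finset.induction_on with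
  | empty =>
    simp only [Finset.prod_empty, Finset.card_empty, Nat.cast_zero]
    exact (analyticAt_const.analyticOrderAt_eq_zero).2 one_ne_zero
  | insert a s ha ih =>
    simp only [Finset.prod_insert ha, Finset.card_insert_of_notMem ha]
    have h1 : Differentiable ℂ (fun z => 1 - ee (α a + z)) := by fun_prop
    have h2 : Differentiable ℂ (fun z => ∏ i ∈ s, (1 - ee (α i + z))) := by fun_prop
    have := analyticOrderAt_mul (h1.analyticAt w) (h2.analyticAt w)
    rw [ih fun i hi => hs i (Finset.mem_insert_of_mem hi),
      factor_order _ _ (hs a (Finset.mem_insert_self a s))] at this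
    push_cast
    rw [add_comm, ← this]
    rfl

lemma PP_order (h : Summable fun i => ‖ee (α i)‖) (w : ℂ) :
    analyticOrderAt (PP α) w = {i | ee (α i + w) = 1}.encard := by
  classical
  set s := (PP_finite h w).toFinset with hs
  have hsum : Summable fun i : {i // i ∈ ((s : Set ι)ᶜ)} => ‖ee (α i)‖ := h.subtype _
  have e : PP α = fun z => (∏ i ∈ s, (1 - ee (α i + z))) *
      PP (fun i : {i // i ∈ ((s : Set ι)ᶜ)} => α i) z := by
    funext z
    have h2 := PP_multipliable hsum z
    have := Multipliable.tprod_mul_tprod_compl (f := fun i => 1 - ee (α i + z)) (s := (s : Set ι))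
      (Set.Finite.multipliable (s.finite_toSet) _) h2
    unfold PP
    rw [← this]
    congr 1
    exact Finset.tprod_subtype s fun i => 1 - ee (α i + z)
  have h1 : Differentiable ℂ (fun z => ∏ i ∈ s, (1 - ee (α i + z))) := by fun_prop
  have h2 := PP_differentiable hsum
  have := analyticOrderAt_mul (h1.analyticAt w) (h2.analyticAt w)
  rw [e]
  refine this.trans ?_
  rw [finprod_order s w (fun i hi => by simpa [hs] using hi),
    (h2.analyticAt w).analyticOrderAt_eq_zero.2 (PP_ne_zero hsum w ?_), add_zero]
  · rw [← Set.encard_coe_eq_coe_finsetCard, hs, Set.Finite.coe_toFinset]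
  · rintro ⟨i, hi⟩
    simpa [hs] using hi

lemma PP_comp_order (h : Summable fun i => ‖ee (α i)‖) (s d z : ℂ) (hs : s ≠ 0) :
    analyticOrderAt (fun z => PP α (s * z + d)) z = {i | ee (α i + (s * z + d)) = 1}.encard := by
  have hd : HasDerivAt (fun z => s * z + d) s z := by
    simpa using ((hasDerivAt_id z).const_mul s).add_const d
  have hdf : Differentiable ℂ (fun z => s * z + d) := by fun_prop
  have := analyticOrderAt_comp_of_deriv_ne_zero (f := PP α) (hdf.analyticAt z)
    (by rw [hd.deriv]; exact hs)
  rw [PP_order h] at this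
  exact this

end PPlemmas

/-- entire and nowhere locally zero -/
def Good (f : ℂ → ℂ) : Prop := Differentiable ℂ f ∧ ∀ z, analyticOrderAt f z ≠ ⊤

lemma Good.mul {f g : ℂ → ℂ} (hf : Good f) (hg : Good g) : Good (fun z => f z * g z) := by
  refine ⟨hf.1.mul hg.1, fun z => ?_⟩
  have := analyticOrderAt_mul (hf.1.analyticAt z) (hg.1.analyticAt z)
  change analyticOrderAt (f * g) z ≠ ⊤
  rw [this]
  simp [hf.2 z, hg.2 z]

lemma Good.shift {f : ℂ → ℂ} (hf : Good f) (a : ℂ) : Good (fun z => f (z + a)) := by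
  refine ⟨by have := hf.1; fun_prop, fun z => ?_⟩
  have hd : HasDerivAt (fun z => z + a) 1 z := (hasDerivAt_id z).add_const a
  have hdf : Differentiable ℂ (fun z => z + a) := by fun_prop
  have := analyticOrderAt_comp_of_deriv_ne_zero (f := f) (hdf.analyticAt z)
    (by rw [hd.deriv]; exact one_ne_zero)
  change analyticOrderAt (f ∘ fun z => z + a) z ≠ ⊤
  rw [this]
  exact hf.2 _

lemma Good.cancel {h A B : ℂ → ℂ} (hh : Good h) (hA : Continuous A) (hB : Continuous B)
    (e : ∀ z, A z * h z = B z * h z) (z : ℂ) : A z = B z := by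
  have h1 : ∀ᶠ w in 𝓝[≠] z, h w ≠ 0 := by
    rcases (hh.1.analyticAt z).eventually_eq_zero_or_eventually_ne_zero with h0 | h0
    · exact absurd (analyticOrderAt_eq_top.2 h0) (hh.2 z)
    · exact h0
  have h2 : A =ᶠ[𝓝[≠] z] B := h1.mono fun w hw => mul_right_cancel₀ hw (e w)
  have tA : Tendsto A (𝓝[≠] z) (𝓝 (A z)) := hA.continuousAt.tendsto.mono_left nhdsWithin_le_nhds
  have tB : Tendsto B (𝓝[≠] z) (𝓝 (B z)) := hB.continuousAt.tendsto.mono_left nhdsWithin_le_nhds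
  exact tendsto_nhds_unique (tA.congr' h2) tB

lemma PP_good {ι : Type*} {α : ι → ℂ} (h : Summable fun i => ‖ee (α i)‖) (s d : ℂ) (hs : s ≠ 0) :
    Good (fun z => PP α (s * z + d)) := by
  refine ⟨by have := PP_differentiable h; fun_prop, fun z => ?_⟩
  rw [PP_comp_order h s d z hs]
  exact Set.encard_ne_top_iff.2 (PP_finite h _)

lemma quotient_entire {f g : ℂ → ℂ} (hf : Good f) (hg : Good g)
    (ho : ∀ z, analyticOrderAt f z = analyticOrderAt g z) :
    ∃ U : ℂ → ℂ, Differentiable ℂ U ∧ (∀ z, U z ≠ 0) ∧ ∀ z, f z = U z * g z := by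
  have loc : ∀ z0, ∃ u : ℂ → ℂ, AnalyticAt ℂ u z0 ∧ u z0 ≠ 0 ∧ (∀ᶠ z in 𝓝 z0, f z = u z * g z) ∧
      ∀ᶠ z in 𝓝 z0, limUnder (𝓝[≠] z) (fun w => f w / g w) = u z := by
    intro z0
    obtain ⟨n, hn⟩ := ENat.ne_top_iff_exists.1 (hg.2 z0)
    obtain ⟨a, ha, ha0, hfa⟩ := ((hf.1.analyticAt z0).analyticOrderAt_eq_natCast).1
      ((ho z0).trans hn.symm)
    obtain ⟨b, hb, hb0, hgb⟩ := ((hg.1.analyticAt z0).analyticOrderAt_eq_natCast).1 hn.symm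
    have hbne : ∀ᶠ z in 𝓝 z0, b z ≠ 0 := hb.continuousAt.eventually_ne hb0
    have hu : AnalyticAt ℂ (fun z => a z / b z) z0 := ha.div hb hb0
    refine ⟨fun z => a z / b z, hu, div_ne_zero ha0 hb0, ?_, ?_⟩
    · filter_upwards [hfa, hgb, hbne] with z h1 h2 h3
      rw [h1, h2]; simp only [smul_eq_mul]; field_simp
    · filter_upwards [hfa.eventually_nhds, hgb.eventually_nhds, hbne.eventually_nhds,
        hu.eventually_analyticAt] with z h1 h2 h3 h4
      apply Tendsto.limUnder_eq
      have t : Tendsto (fun z => a z / b z) (𝓝[≠] z) (𝓝 (a z / b z)) :=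
        h4.continuousAt.tendsto.mono_left nhdsWithin_le_nhds
      refine t.congr' ?_
      have hz : ∀ᶠ w in 𝓝[≠] z, w ≠ z0 := by
        by_cases hzz : z = z0
        · subst hzz; exact self_mem_nhdsWithin
        · exact nhdsWithin_le_nhds (isOpen_ne.mem_nhds hzz)
      filter_upwards [nhdsWithin_le_nhds h1, nhdsWithin_le_nhds h2, nhdsWithin_le_nhds h3, hz]
        with w e1 e2 e3 e4
      have : w - z0 ≠ 0 := sub_ne_zero.2 e4
      rw [e1, e2]; simp only [smul_eq_mul]; field_simp
  refine ⟨fun z => limUnder (𝓝[≠] z) (fun w => f w / g w), fun z => ?_, fun z => ?_, fun z => ?_⟩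
  · obtain ⟨u, h1, h2, h3, h4⟩ := loc z
    exact h1.differentiableAt.congr_of_eventuallyEq h4
  · obtain ⟨u, h1, h2, h3, h4⟩ := loc z
    have := h4.self_of_nhds
    simp only [this]; exact h2
  · obtain ⟨u, h1, h2, h3, h4⟩ := loc z
    have := h4.self_of_nhds
    simp only [this]; exact h3.self_of_nhds

lemma doubly_periodic_const {f : ℂ → ℂ} (hf : Differentiable ℂ f) {a b : ℂ} (hab : 0 < (b / a).im)
    (ha : ∀ z, f (z + a) = f z) (hb : ∀ z, f (z + b) = f z) (z w : ℂ) : f z = f w := by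
  apply hf.apply_eq_apply_of_bounded
  have ha0 : a ≠ 0 := by rintro rfl; simp at hab
  have hK : IsCompact ((fun p : ℝ × ℝ => f (p.1 * a + p.2 * b)) ''
      (Set.Icc (0 : ℝ) 1 ×ˢ Set.Icc (0 : ℝ) 1)) := by
    apply (isCompact_Icc.prod isCompact_Icc).image
    have := hf.continuous
    fun_prop
  refine hK.isBounded.subset ?_
  rintro _ ⟨z, rfl⟩
  have hna : ∀ (n : ℤ) z, f (z + n * a) = f z := by
    intro n z
    have : Function.Periodic f a := ha
    exact this.int_mul n z
  have hnb : ∀ (n : ℤ) z, f (z + n * b) = f z := by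
    intro n z
    have : Function.Periodic f b := hb
    exact this.int_mul n z
  set y : ℝ := (z / a).im / (b / a).im with hy
  set x : ℝ := (z / a).re - y * (b / a).re with hx
  have hz : z = x * a + y * b := by
    have : z / a = x + y * (b / a) := by
      apply Complex.ext
      · simp [hx]
      · simp only [Complex.add_im, Complex.ofReal_im, Complex.mul_im, Complex.ofReal_re, hy]
        field_simp
        simp
    field_simp at this
    linear_combination this
  refine ⟨(Int.fract x, Int.fract y), ⟨⟨Int.fract_nonneg _, (Int.fract_lt_one _).le⟩,
    ⟨Int.fract_nonneg _, (Int.fract_lt_one _).le⟩⟩, ?_⟩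
  simp only
  rw [← hna ⌊x⌋, ← hnb ⌊y⌋]
  congr 1
  rw [hz]
  have e1 : (x : ℂ) = ⌊x⌋ + (Int.fract x : ℝ) := by
    exact_mod_cast (Int.floor_add_fract x).symm
  have e2 : (y : ℂ) = ⌊y⌋ + (Int.fract y : ℝ) := by
    exact_mod_cast (Int.floor_add_fract y).symm
  linear_combination -a * e1 - b * e2

lemma quasi_periodic_exp {E : ℂ → ℂ} (hE : Differentiable ℂ E) (h0 : ∀ z, E z ≠ 0) {a b : ℂ}
    (hab : 0 < (b / a).im) {u v : ℂ}
    (ha : ∀ z, E (z + a) = u * E z) (hb : ∀ z, E (z + b) = v * E z) :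
    ∃ c : ℂ, ∀ z w, E z = E w * Complex.exp (c * (z - w)) := by
  have hd : Differentiable ℂ (deriv E) := fun z => (hE.analyticAt z).deriv.differentiableAt
  have hL : Differentiable ℂ (fun z => deriv E z / E z) := hd.div hE h0
  have per : ∀ a u : ℂ, (∀ z, E (z + a) = u * E z) → ∀ z,
      deriv E (z + a) / E (z + a) = deriv E z / E z := by
    intro a u ha z
    have hu : u ≠ 0 := by
      intro h; have := ha 0; rw [h] at this; simp at this; exact h0 _ this
    have : deriv E (z + a) = u * deriv E z := by
      rw [← deriv_comp_add_const, ← deriv_const_mul _ (hE z)]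
      congr 1; funext z; exact ha z
    rw [this, ha, mul_div_mul_left _ _ hu]
  have hc := doubly_periodic_const hL hab (per a u ha) (per b v hb)
  refine ⟨deriv E 0 / E 0, fun z w => ?_⟩
  set c := deriv E 0 / E 0
  have hconst : ∀ z w, E z * Complex.exp (-c * z) = E w * Complex.exp (-c * w) := by
    apply is_const_of_deriv_eq_zero (f := fun z => E z * Complex.exp (-c * z))
    · fun_prop
    · intro x
      have h1 : HasDerivAt (fun z => Complex.exp (-c * z)) (Complex.exp (-c * x) * (-c)) x := by
        simpa using ((hasDerivAt_id x).const_mul (-c)).cexp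
      have h2 := (hE x).hasDerivAt.mul h1
      have h3 : deriv E x = c * E x := by
        have := hc x 0
        rw [div_eq_iff (h0 x)] at this
        exact this
      refine h2.deriv.trans ?_
      rw [h3]; ring
  have := hconst z w
  have e : Complex.exp (c * (z - w)) = Complex.exp (-c * w) * Complex.exp (c * z) := by
    rw [← Complex.exp_add]; ring_nf
  rw [e, ← mul_assoc, ← this, mul_assoc, ← Complex.exp_add]
  simp


/-- `ex z = e^{πiz}`. -/
noncomputable def ex (z : ℂ) : ℂ := Complex.exp (Real.pi * Complex.I * z)

lemma ex_add (a b : ℂ) : ex (a + b) = ex a * ex b := by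
  unfold ex; rw [← Complex.exp_add]; ring_nf

lemma ex_ne_zero (a : ℂ) : ex a ≠ 0 := Complex.exp_ne_zero _

lemma ex_zero : ex 0 = 1 := by simp [ex]

lemma ex_one : ex 1 = -1 := by simp [ex, Complex.exp_pi_mul_I]

lemma ee_eq_ex (x : ℂ) : ee x = ex (2 * x) := by
  unfold ee ex; ring_nf

lemma neg_ee_eq_ex (x : ℂ) : -ee x = ex (2 * x + 1) := by
  rw [ex_add, ex_one, ee_eq_ex]; ring

@[fun_prop]
lemma differentiable_ex : Differentiable ℂ ex := by
  unfold ex; fun_prop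

lemma ee_half : ee (1 / 2) = -1 := by rw [ee_eq_ex, ← ex_one]; norm_num

lemma encard_of_image {ι X : Type*} {S : Set ι} (T : Set X) (p : X → ι) (hinj : Set.InjOn p T)
    (h : p '' T = S) : S.encard = T.encard := by
  rw [← h, hinj.encard_image]

/-- `φ(w,t) = ∏ (1 - e(jt+w))` -/
noncomputable def ph (t w : ℂ) : ℂ := PP (fun j : ℕ => (j : ℂ) * t) w

/-- `G(w,t,s) = ∏ (1 - e(jt+ls+w))` -/
noncomputable def GG (t s w : ℂ) : ℂ := PP (fun p : ℕ × ℕ => (p.1 : ℂ) * t + (p.2 : ℂ) * s) w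

lemma ph_summable {t : ℂ} (ht : 0 < t.im) : Summable fun j : ℕ => ‖ee ((j : ℂ) * t)‖ := by
  simp only [ee_nat_mul, norm_pow]
  exact summable_geometric_of_lt_one (norm_nonneg _) (norm_ee_lt_one ht)

lemma GG_summable {t s : ℂ} (ht : 0 < t.im) (hs : 0 < s.im) :
    Summable fun p : ℕ × ℕ => ‖ee ((p.1 : ℂ) * t + (p.2 : ℂ) * s)‖ := by
  simp only [ee_add, norm_mul]
  exact (ph_summable ht).mul_of_nonneg (ph_summable hs) (fun _ => norm_nonneg _)
    (fun _ => norm_nonneg _)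

lemma PP_add_one {ι : Type*} (α : ι → ℂ) (w : ℂ) : PP α (w + 1) = PP α w := by
  unfold PP
  simp only [← add_assoc, ee_add _ 1, ee_one, mul_one]

lemma ph_add_one (t w : ℂ) : ph t (w + 1) = ph t w := PP_add_one _ _
lemma GG_add_one (t s w : ℂ) : GG t s (w + 1) = GG t s w := PP_add_one _ _

lemma ph_step {t : ℂ} (ht : 0 < t.im) (w : ℂ) : ph t w = (1 - ee w) * ph t (w + t) := by
  unfold ph PP
  have e : ∀ j : ℕ, 1 - ee ((j : ℂ) * t + (w + t)) = 1 - ee (((j + 1 : ℕ) : ℂ) * t + w) := by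
    intro j; congr 2; push_cast; ring
  have := PP_multipliable (ph_summable ht) (w + t)
  rw [funext e] at this
  rw [tprod_congr e, tprod_eq_zero_mul' (f := fun j : ℕ => 1 - ee ((j : ℂ) * t + w)) this]
  simp

lemma GG_symm (t s w : ℂ) : GG t s w = GG s t w := by
  unfold GG PP
  rw [← (Equiv.prodComm ℕ ℕ).tprod_eq]
  refine tprod_congr fun p => ?_
  simp [add_comm]

lemma GG_fiber {t s : ℂ} (ht : 0 < t.im) (hs : 0 < s.im) (w : ℂ) :
    HasProd (fun j : ℕ => ph s ((j : ℂ) * t + w)) (GG t s w) := by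
  have h := (PP_multipliable (GG_summable ht hs) w).hasProd
  have := h.prod_fiberwise (g := fun j : ℕ => ph s ((j : ℂ) * t + w)) (fun j => by
    have := (PP_multipliable (ph_summable hs) ((j : ℂ) * t + w)).hasProd
    have e : (fun l : ℕ => 1 - ee ((j : ℂ) * t + (l : ℂ) * s + w)) =
        fun l : ℕ => 1 - ee ((l : ℂ) * s + ((j : ℂ) * t + w)) := by
      funext l; congr 2; ring
    change HasProd (fun l : ℕ => 1 - ee ((j : ℂ) * t + (l : ℂ) * s + w)) _
    rw [e]; exact this)
  exact this

lemma GG_step1 {t s : ℂ} (ht : 0 < t.im) (hs : 0 < s.im) (w : ℂ) :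
    GG t s w = ph s w * GG t s (w + t) := by
  have h1 := GG_fiber ht hs w
  have h2 := GG_fiber ht hs (w + t)
  have e : (fun j : ℕ => ph s ((j : ℂ) * t + (w + t))) =
      fun j : ℕ => (fun j : ℕ => ph s ((j : ℂ) * t + w)) (j + 1) := by
    funext j; simp only; congr 1; push_cast; ring
  rw [e] at h2
  have := h1.unique h2.zero_mul
  simpa using this

lemma GG_step2 {t s : ℂ} (ht : 0 < t.im) (hs : 0 < s.im) (w : ℂ) :
    GG t s w = ph t w * GG t s (w + s) := by
  rw [GG_symm, GG_step1 hs ht, GG_symm]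

/-- the theta function -/
noncomputable def th (t w : ℂ) : ℂ := ph t (t - w) * ph t w

lemma th_add_one (t w : ℂ) : th t (w + 1) = th t w := by
  unfold th
  rw [ph_add_one]
  have : ph t (t - w) = ph t (t - (w + 1)) := by
    rw [← ph_add_one t (t - (w + 1))]; congr 1; ring
  rw [this]

lemma th_step {t : ℂ} (ht : 0 < t.im) (w : ℂ) : th t (w + t) = -ee (-w) * th t w := by
  unfold th
  have h1 := ph_step ht (-w)
  have h2 := ph_step ht w
  have e : t - (w + t) = -w := by ring
  rw [e, h1, h2]
  have h3 : ee (-w) * ee w = 1 := by rw [← ee_add]; simp [ee_zero]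
  have e2 : -w + t = t - w := by ring
  rw [e2]
  linear_combination (-ph t (t - w) * ph t (w + t)) * h3

lemma ph_double {t : ℂ} (ht : 0 < t.im) (w : ℂ) : ph t w * ph t (w + 1 / 2) = ph (2 * t) (2 * w) := by
  unfold ph PP
  rw [← (PP_multipliable (ph_summable ht) w).tprod_mul (PP_multipliable (ph_summable ht) (w + 1 / 2))]
  refine tprod_congr fun j => ?_
  rw [← add_assoc, ee_add _ (1 / 2), ee_half,
    show (j : ℂ) * (2 * t) + 2 * w = (j * t + w) + (j * t + w) by ring, ee_add (_ + _) (_ + _)]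
  ring

lemma ph_even_odd {t : ℂ} (ht : 0 < t.im) : ph t t = ph (2 * t) t * ph (2 * t) (2 * t) := by
  have ht2 : 0 < (2 * t).im := by simpa using ht
  have e0 : ∀ k : ℕ, 1 - ee ((k : ℂ) * (2 * t) + t) = 1 - ee (((2 * k : ℕ) : ℂ) * t + t) := by
    intro j; congr 2; push_cast; ring
  have e1 : ∀ k : ℕ, 1 - ee ((k : ℂ) * (2 * t) + 2 * t) =
      1 - ee (((2 * k + 1 : ℕ) : ℂ) * t + t) := by
    intro j; congr 2; push_cast; ring
  have h0 := PP_multipliable (ph_summable ht2) t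
  have h1 := PP_multipliable (ph_summable ht2) (2 * t)
  unfold ph PP
  rw [funext e0] at h0
  rw [funext e1] at h1
  rw [tprod_congr e0, tprod_congr e1]
  exact (tprod_even_mul_odd (f := fun j : ℕ => 1 - ee ((j : ℂ) * t + t)) h0 h1).symm

lemma th_half {t : ℂ} (ht : 0 < t.im) :
    th t (1 / 2) * th t (t / 2) * th t (1 / 2 + t / 2) = 2 := by
  have ht2 : 0 < (2 * t).im := by simpa using ht
  have hne : ph (2 * t) (2 * t) ≠ 0 := by
    apply PP_ne_zero (ph_summable ht2)
    intro j hj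
    have e : (j : ℂ) * (2 * t) + 2 * t = ((2 * j + 2 : ℕ) : ℂ) * t := by push_cast; ring
    rw [e, ee_nat_mul] at hj
    have h1 := norm_ee_lt_one ht
    have h2 := pow_lt_one₀ (norm_nonneg (ee t)) h1 (n := 2 * j + 2) (by omega)
    rw [← norm_pow, hj] at h2
    simp at h2
  have a1 : th t (1 / 2) = 2 * ph t (t + 1 / 2) ^ 2 := by
    unfold th
    rw [ph_step ht (1 / 2), ee_half, ← ph_add_one t (t - 1 / 2),
      show t - 1 / 2 + 1 = t + 1 / 2 by ring, show 1 / 2 + t = t + 1 / 2 by ring]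
    ring
  have a2 : th t (t / 2) = ph t (t / 2) ^ 2 := by
    unfold th
    rw [show t - t / 2 = t / 2 by ring]; ring
  have a3 : th t (1 / 2 + t / 2) = ph t (t / 2 + 1 / 2) ^ 2 := by
    unfold th
    rw [← ph_add_one t (t - _), show t - (1 / 2 + t / 2) + 1 = t / 2 + 1 / 2 by ring,
      show 1 / 2 + t / 2 = t / 2 + 1 / 2 by ring]; ring
  have b1 := ph_double ht (t / 2)
  have b2 := ph_double ht t
  have b3 := ph_even_odd ht
  rw [show 2 * (t / 2) = t by ring] at b1
  have b4 : ph t (t + 1 / 2) * ph t (t / 2) * ph t (t / 2 + 1 / 2) = 1 := by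
    apply mul_right_cancel₀ hne
    rw [one_mul]
    linear_combination b2 - ph t (t + 1 / 2) * b3 + ph t (t + 1 / 2) * ph (2 * t) (2 * t) * b1
  rw [a1, a2, a3]
  linear_combination 2 * (ph t (t + 1 / 2) * ph t (t / 2) * ph t (t / 2 + 1 / 2) + 1) * b4

lemma PP_lat {ι X : Type*} {α : ι → ℂ} (h : Summable fun i => ‖ee (α i)‖) (A : ℂ → ℂ) (s d : ℂ)
    (hs : s ≠ 0) (hA : ∀ z, A z = s * z + d) (z : ℂ) (T : Set X) (p : X → ι)
    (hinj : Set.InjOn p T) (him : ∀ i, (∃ x ∈ T, p x = i) ↔ ∃ n : ℤ, α i + A z = n) :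
    analyticOrderAt (fun z => PP α (A z)) z = T.encard := by
  obtain rfl : A = fun z => s * z + d := funext hA
  rw [PP_comp_order h s d z hs]
  apply encard_of_image T p hinj
  ext i
  rw [Set.mem_image, him]
  exact (ee_eq_one_iff _).symm

lemma PP_good' {ι : Type*} {α : ι → ℂ} (h : Summable fun i => ‖ee (α i)‖) (A : ℂ → ℂ) (s d : ℂ)
    (hs : s ≠ 0) (hA : ∀ z, A z = s * z + d) : Good (fun z => PP α (A z)) := by
  obtain rfl : A = fun z => s * z + d := funext hA
  exact PP_good h s d hs

lemma neg_inv_im_pos {t : ℂ} (ht : 0 < t.im) : 0 < (-1 / t).im := by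
  have h0 : t ≠ 0 := by rintro rfl; simp at ht
  rw [neg_div, one_div, Complex.neg_im, Complex.inv_im, neg_div, neg_neg]
  exact div_pos ht (Complex.normSq_pos.2 h0)

lemma th_good {t : ℂ} (ht : 0 < t.im) (s : ℂ) (hs : s ≠ 0) : Good (fun z => th t (s * z)) :=
  (PP_good' (ph_summable ht) (fun z => t - s * z) (-s) t (neg_ne_zero.2 hs)
    (fun z => by ring)).mul (PP_good' (ph_summable ht) (fun z => s * z) s 0 hs (fun z => by ring))

lemma int_lin {τ : ℂ} (hτ : 0 < τ.im) {a b c d : ℤ} (h : (a : ℂ) + b * τ = c + d * τ) :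
    a = c ∧ b = d := by
  have h1 := congrArg Complex.im h
  simp at h1
  have hb : b = d := by
    rcases h1 with h1 | h1
    · exact_mod_cast h1
    · exact absurd h1 hτ.ne'
  subst hb
  refine ⟨?_, rfl⟩
  have := add_right_cancel h
  exact_mod_cast this

lemma encard_split {X : Type*} (S : Set X) (P : X → Prop) :
    {x | x ∈ S ∧ P x}.encard + {x | x ∈ S ∧ ¬ P x}.encard = S.encard := by
  rw [← Set.encard_union_eq]
  · congr 1
    ext x
    simp only [Set.mem_union, Set.mem_ofPred_eq]
    tauto
  · rw [Set.disjoint_left]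
    rintro x ⟨_, h1⟩ ⟨_, h2⟩
    exact h2 h1

lemma th_order {τ : ℂ} (hτ : 0 < τ.im) (z : ℂ) :
    analyticOrderAt (fun z => th τ z) z = {x : ℤ × ℤ | (x.1 : ℂ) + x.2 * τ = z}.encard := by
  set L := {x : ℤ × ℤ | (x.1 : ℂ) + x.2 * τ = z} with hL
  have g1 := PP_good' (ph_summable hτ) (fun z => τ - z) (-1) τ (by simp) (fun z => by ring)
  have g2 := PP_good' (ph_summable hτ) (fun z => z) 1 0 (by simp) (fun z => by ring)
  have o1 := PP_lat (ph_summable hτ) (fun z => τ - z) (-1) τ (by simp) (fun z => by ring) z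
    {x | x ∈ L ∧ 0 < x.2} (fun x => (x.2 - 1).toNat)
    (by
      rintro ⟨a, b⟩ ⟨h1, h2⟩ ⟨c, d⟩ ⟨h3, h4⟩ h
      simp only [hL, Set.mem_ofPred_eq] at *
      have hbd : b = d := by omega
      subst hbd
      have := int_lin hτ (h1.trans h3.symm)
      simp [this.1])
    (by
      intro j
      constructor
      · rintro ⟨⟨a, b⟩, ⟨h1, h2⟩, h3⟩
        simp only [hL, Set.mem_ofPred_eq] at *
        have hb : b = j + 1 := by omega
        refine ⟨-a, ?_⟩
        rw [← h1, hb]; push_cast; ring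
      · rintro ⟨n, hn⟩
        refine ⟨(-n, j + 1), ⟨?_, ?_⟩, ?_⟩
        · simp only [hL, Set.mem_ofPred_eq]
          push_cast
          linear_combination hn
        · show (0 : ℤ) < (j : ℤ) + 1
          positivity
        · simp)
  have o2 := PP_lat (ph_summable hτ) (fun z => z) 1 0 (by simp) (fun z => by ring) z
    {x | x ∈ L ∧ ¬ 0 < x.2} (fun x => (-x.2).toNat)
    (by
      rintro ⟨a, b⟩ ⟨h1, h2⟩ ⟨c, d⟩ ⟨h3, h4⟩ h
      simp only [hL, Set.mem_ofPred_eq] at *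
      have hbd : b = d := by omega
      subst hbd
      have := int_lin hτ (h1.trans h3.symm)
      simp [this.1])
    (by
      intro j
      constructor
      · rintro ⟨⟨a, b⟩, ⟨h1, h2⟩, h3⟩
        simp only [hL, Set.mem_ofPred_eq] at *
        have hb : b = -j := by omega
        refine ⟨a, ?_⟩
        rw [← h1, hb]; push_cast; ring
      · rintro ⟨n, hn⟩
        refine ⟨(n, -j), ⟨?_, ?_⟩, ?_⟩
        · simp only [hL, Set.mem_ofPred_eq]
          push_cast
          linear_combination -hn
        · show ¬ (0 : ℤ) < -(j : ℤ)
          omega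
        · simp)
  have := analyticOrderAt_mul (g1.1.analyticAt z) (g2.1.analyticAt z)
  rw [o1, o2, encard_split] at this
  exact this

lemma th_order_S {τ : ℂ} (hτ : 0 < τ.im) (z : ℂ) :
    analyticOrderAt (fun z => th (-1 / τ) (1 / τ * z)) z =
      {x : ℤ × ℤ | (x.1 : ℂ) + x.2 * τ = z}.encard := by
  have h0 : τ ≠ 0 := by rintro rfl; simp at hτ
  have hs : 1 / τ ≠ 0 := one_div_ne_zero h0
  have hd : HasDerivAt (fun z => 1 / τ * z) (1 / τ) z := by
    simpa using ((hasDerivAt_id z).const_mul (1 / τ))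
  have hdf : Differentiable ℂ (fun z => 1 / τ * z) := by fun_prop
  have := analyticOrderAt_comp_of_deriv_ne_zero (f := fun w => th (-1 / τ) w) (hdf.analyticAt z)
    (by rw [hd.deriv]; exact hs)
  refine this.trans ?_
  rw [th_order (neg_inv_im_pos hτ)]
  symm
  apply encard_of_image _ (fun x : ℤ × ℤ => (-x.2, x.1))
  · rintro ⟨a, b⟩ - ⟨c, d⟩ - h
    simp at h
    simp [h]
  · ext ⟨a, b⟩
    simp only [Set.mem_image, Set.mem_ofPred_eq, Prod.mk.injEq, Prod.exists]
    constructor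
    · rintro ⟨c, d, h1, rfl, rfl⟩
      field_simp at h1
      push_cast
      linear_combination h1
    · intro h
      refine ⟨b, -a, ?_, by simp, rfl⟩
      rw [← h]; push_cast; field_simp; ring

lemma theta_S {τ : ℂ} (hτ : 0 < τ.im) : ∃ n : ℤ, ∀ z, th (-1 / τ) (z / τ) =
    ex (z ^ 2 / τ + z * (1 / τ - 1) + (1 / 2 + 1 / (2 * τ) + τ / 2 + 2 * n) / 3) * th τ z := by
  have h0 : τ ≠ 0 := by rintro rfl; simp at hτ
  have ht := neg_inv_im_pos hτ
  have hs : 1 / τ ≠ 0 := one_div_ne_zero h0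
  have gg : Good (fun z => th τ z) := by simpa using th_good hτ 1 one_ne_zero
  have gf := th_good ht (1 / τ) hs
  obtain ⟨U, hU, hU0, hUe⟩ := quotient_entire gf gg
    (fun z => (th_order_S hτ z).trans (th_order hτ z).symm)
  have hUe' : ∀ z, th (-1 / τ) (z / τ) = U z * th τ z := by
    intro z; rw [← hUe]; congr 1; ring
  have s1 : ∀ z, U (z + 1) = -ee ((z + 1) / τ) * U z := by
    apply gg.cancel
    · have := hU.continuous; fun_prop
    · have := hU.continuous; have := differentiable_ee.continuous; fun_prop
    · intro z
      have a1 := hUe' (z + 1)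
      have a2 := th_step ht ((z + 1) / τ)
      rw [show (z + 1) / τ + -1 / τ = z / τ by ring, hUe', a1, th_add_one] at a2
      rw [mul_assoc, a2]
      have : ee ((z + 1) / τ) * ee (-((z + 1) / τ)) = 1 := by
        rw [← ee_add]; simp [ee_zero]
      linear_combination (-U (z + 1) * th τ z) * this
  have s2 : ∀ z, U (z + τ) = -ee z * U z := by
    apply gg.cancel
    · have := hU.continuous; fun_prop
    · have := hU.continuous; have := differentiable_ee.continuous; fun_prop
    · intro z
      have a1 := hUe' (z + τ)
      have a2 := th_step hτ z
      rw [show (z + τ) / τ = z / τ + 1 by field_simp, th_add_one, hUe', a2] at a1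
      rw [mul_assoc, a1]
      have : ee z * ee (-z) = 1 := by
        rw [← ee_add]; simp [ee_zero]
      linear_combination (-U (z + τ) * th τ z) * this
  have hB : ∀ z w, U z * ex (-(z ^ 2 / τ + z * (1 / τ - 1))) =
      U w * ex (-(w ^ 2 / τ + w * (1 / τ - 1))) := by
    apply doubly_periodic_const (a := 1) (b := τ)
    · fun_prop
    · simpa using hτ
    · intro z
      rw [s1, neg_ee_eq_ex, mul_right_comm, ← ex_add, mul_comm]
      congr 1
      have e : 2 * ((z + 1) / τ) + 1 + -((z + 1) ^ 2 / τ + (z + 1) * (1 / τ - 1)) =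
        2 + -(z ^ 2 / τ + z * (1 / τ - 1)) := by field_simp; ring
      rw [e, ex_add, show (2 : ℂ) = 1 + 1 by norm_num, ex_add, ex_one]; ring
    · intro z
      rw [s2, neg_ee_eq_ex, mul_right_comm, ← ex_add, mul_comm]
      congr 2
      field_simp; ring
  set K := U 0 with hK
  have hUK : ∀ z, U z = K * ex (z ^ 2 / τ + z * (1 / τ - 1)) := by
    intro z
    have := hB z 0
    simp only [ne_eq, OfNat.ofNat_ne_zero, not_false_eq_true, zero_pow, zero_div, zero_mul,
      add_zero, neg_zero, ex_zero, mul_one] at this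
    rw [hK, ← this, mul_assoc, ← ex_add]
    simp [ex_zero]
  have p1 := hUe' (1 / 2)
  have p2 := hUe' (τ / 2)
  have p3 := hUe' (1 / 2 + τ / 2)
  have q0 := th_half hτ
  have q1 := th_half ht
  have q2 := th_step ht (-(-1 / τ) / 2)
  have q3 := th_step ht (1 / 2 - (-1 / τ) / 2)
  rw [show -(-1 / τ) / 2 + -1 / τ = -1 / τ / 2 by ring] at q2
  rw [show 1 / 2 - (-1 / τ) / 2 + -1 / τ = 1 / 2 + -1 / τ / 2 by ring] at q3
  rw [show 1 / 2 / τ = -(-1 / τ) / 2 by ring] at p1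
  rw [show τ / 2 / τ = 1 / 2 by field_simp] at p2
  rw [show (1 / 2 + τ / 2) / τ = 1 / 2 - (-1 / τ) / 2 by field_simp; ring] at p3
  rw [q2, q3, p1, p2, p3, hUK, hUK, hUK, neg_ee_eq_ex, neg_ee_eq_ex] at q1
  have hK3 : K ^ 3 = ex (1 / 2 + 1 / (2 * τ) + τ / 2) := by
    have e : K ^ 3 * (ex (2 * -(-(-1 / τ) / 2) + 1) * ex (2 * -(1 / 2 - (-1 / τ) / 2) + 1) *
      ex ((1 / 2) ^ 2 / τ + (1 / 2) * (1 / τ - 1)) * ex ((τ / 2) ^ 2 / τ + (τ / 2) * (1 / τ - 1)) *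
      ex ((1 / 2 + τ / 2) ^ 2 / τ + (1 / 2 + τ / 2) * (1 / τ - 1))) * 2 = 2 := by
      linear_combination q1 - K ^ 3 * (ex (2 * -(-(-1 / τ) / 2) + 1) *
        ex (2 * -(1 / 2 - (-1 / τ) / 2) + 1) *
        ex ((1 / 2) ^ 2 / τ + (1 / 2) * (1 / τ - 1)) *
        ex ((τ / 2) ^ 2 / τ + (τ / 2) * (1 / τ - 1)) *
        ex ((1 / 2 + τ / 2) ^ 2 / τ + (1 / 2 + τ / 2) * (1 / τ - 1))) * q0
    simp only [← ex_add] at e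
    have e' : K ^ 3 * ex (-(1 / 2 + 1 / (2 * τ) + τ / 2) + (1 + 1)) = 1 := by
      have := mul_right_cancel₀ two_ne_zero (e.trans (one_mul 2).symm)
      refine Eq.trans ?_ this
      congr 2
      field_simp; ring
    rw [ex_add _ (1 + 1), ex_add 1 1, ex_one] at e'
    have e3 : ex (-(1 / 2 + 1 / (2 * τ) + τ / 2)) * ex (1 / 2 + 1 / (2 * τ) + τ / 2) = 1 := by
      rw [← ex_add, neg_add_cancel, ex_zero]
    linear_combination (ex (1 / 2 + 1 / (2 * τ) + τ / 2)) * e' - K ^ 3 * e3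
  have hpi : (Real.pi * Complex.I : ℂ) ≠ 0 := by simp [Real.pi_ne_zero]
  have hlog : Complex.exp (Complex.log K) = K := Complex.exp_log (hU0 0)
  rw [← hlog, ← Complex.exp_nat_mul, ex, Complex.exp_eq_exp_iff_exists_int] at hK3
  obtain ⟨n, hn⟩ := hK3
  refine ⟨n, fun z => ?_⟩
  rw [hUe' z, hUK z, ex_add (z ^ 2 / τ + z * (1 / τ - 1)), mul_comm K]
  congr 2
  rw [← hlog, ex]
  congr 1
  push_cast at hn
  linear_combination hn / 3


lemma GG_lat {t s : ℂ} (ht : 0 < t.im) (hs : 0 < s.im) (A : ℂ → ℂ) (k d : ℂ)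
    (hk : k ≠ 0) (hA : ∀ z, A z = k * z + d) (z : ℂ) (L : Set (ℤ × ℤ × ℤ)) (P : ℤ × ℤ × ℤ → Prop)
    (q : ℤ → ℕ → ℕ → ℤ × ℤ × ℤ)
    (hq : ∀ (n : ℤ) (j l : ℕ), (j : ℂ) * t + (l : ℂ) * s + A z = n ↔ q n j l ∈ L)
    (hP : ∀ x, P x ↔ ∃ n j l, q n j l = x)
    (hinj : ∀ n j l n' j' l', q n j l = q n' j' l' → n = n' ∧ j = j' ∧ l = l') :
    Good (fun z => GG t s (A z)) ∧
      analyticOrderAt (fun z => GG t s (A z)) z = {x | x ∈ L ∧ P x}.encard := by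
  classical
  refine ⟨PP_good' (GG_summable ht hs) A k d hk hA, ?_⟩
  obtain rfl : A = fun z => k * z + d := funext hA
  refine (PP_comp_order (GG_summable ht hs) k d z hk).trans ?_
  symm
  have hn : ∀ i : ℕ × ℕ, ∃ n : ℤ, ee ((i.1 : ℂ) * t + (i.2 : ℂ) * s + (k * z + d)) = 1 →
      (i.1 : ℂ) * t + (i.2 : ℂ) * s + (k * z + d) = n := by
    intro i
    by_cases h : ee ((i.1 : ℂ) * t + (i.2 : ℂ) * s + (k * z + d)) = 1
    · obtain ⟨n, hn⟩ := (ee_eq_one_iff _).1 h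
      exact ⟨n, fun _ => hn⟩
    · exact ⟨0, fun h' => absurd h' h⟩
  choose N hN using hn
  apply encard_of_image _ (fun i : ℕ × ℕ => q (N i) i.1 i.2)
  · rintro ⟨j, l⟩ - ⟨j', l'⟩ - h
    have := hinj _ _ _ _ _ _ h
    exact Prod.ext this.2.1 this.2.2
  · ext x
    constructor
    · rintro ⟨i, hi, rfl⟩
      exact ⟨(hq _ _ _).1 (hN i hi), (hP _).2 ⟨_, _, _, rfl⟩⟩
    · rintro ⟨hx, hPx⟩
      obtain ⟨n, j, l, rfl⟩ := (hP _).1 hPx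
      have h1 := (hq _ _ _).2 hx
      have h2 : ee (((j, l) : ℕ × ℕ).1 * t + (((j, l) : ℕ × ℕ).2 : ℂ) * s + (k * z + d)) = 1 :=
        (ee_eq_one_iff _).2 ⟨n, h1⟩
      refine ⟨(j, l), h2, ?_⟩
      have h3 := hN (j, l) h2
      have : N (j, l) = n := by
        have := h3.symm.trans h1
        exact_mod_cast this
      simp only [this]

lemma encard_comb {X : Type*} (L : Set X) (A B C : X → Prop) :
    {x | x ∈ L ∧ (¬ A x ∧ C x)}.encard + {x | x ∈ L ∧ (A x ∧ B x)}.encard +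
      {x | x ∈ L ∧ (¬ B x ∧ ¬ C x)}.encard =
    {x | x ∈ L ∧ (A x ∧ ¬ C x)}.encard + {x | x ∈ L ∧ (¬ A x ∧ ¬ B x)}.encard +
      {x | x ∈ L ∧ (B x ∧ C x)}.encard := by
  have key : ∀ (P Q : X → Prop), {x | x ∈ L ∧ P x}.encard =
      {x | x ∈ L ∧ (P x ∧ Q x)}.encard + {x | x ∈ L ∧ (P x ∧ ¬ Q x)}.encard := by
    intro P Q
    rw [← encard_split {x | x ∈ L ∧ P x} Q]
    simp only [Set.mem_ofPred_eq, and_assoc]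
  rw [key (fun x => ¬ A x ∧ C x) B, key (fun x => A x ∧ B x) C, key (fun x => ¬ B x ∧ ¬ C x) A,
    key (fun x => A x ∧ ¬ C x) B, key (fun x => ¬ A x ∧ ¬ B x) C, key (fun x => B x ∧ C x) A]
  have c : ∀ P Q : X → Prop, (∀ x, P x ↔ Q x) → {x | x ∈ L ∧ P x}.encard =
      {x | x ∈ L ∧ Q x}.encard := by
    intro P Q h; simp only [h]
  rw [c (fun x => (A x ∧ ¬ C x) ∧ B x) (fun x => (A x ∧ B x) ∧ ¬ C x) (fun x => by tauto),
    c (fun x => (A x ∧ ¬ C x) ∧ ¬ B x) (fun x => (¬ B x ∧ ¬ C x) ∧ A x) (fun x => by tauto),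
    c (fun x => (¬ A x ∧ ¬ B x) ∧ C x) (fun x => (¬ A x ∧ C x) ∧ ¬ B x) (fun x => by tauto),
    c (fun x => (¬ A x ∧ ¬ B x) ∧ ¬ C x) (fun x => (¬ B x ∧ ¬ C x) ∧ ¬ A x) (fun x => by tauto),
    c (fun x => (B x ∧ C x) ∧ A x) (fun x => (A x ∧ B x) ∧ C x) (fun x => by tauto),
    c (fun x => (B x ∧ C x) ∧ ¬ A x) (fun x => (¬ A x ∧ C x) ∧ B x) (fun x => by tauto)]
  ring

lemma order_mul3 {f g h : ℂ → ℂ} (hf : Good f) (hg : Good g) (hh : Good h) (z : ℂ) :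
    Good (fun z => f z * g z * h z) ∧ analyticOrderAt (fun z => f z * g z * h z) z =
      analyticOrderAt f z + analyticOrderAt g z + analyticOrderAt h z := by
  refine ⟨(hf.mul hg).mul hh, ?_⟩
  rw [← analyticOrderAt_mul (hf.1.analyticAt z) (hg.1.analyticAt z),
    ← analyticOrderAt_mul ((hf.1.mul hg.1).analyticAt z) (hh.1.analyticAt z)]
  rfl

/-- numerator -/
noncomputable def FN (τ σ z : ℂ) : ℂ :=
  GG (-1 / τ) (σ / τ) (-1 / τ + σ / τ - z / τ) * GG (-(τ / σ)) (-1 / σ) ((z - τ) / σ) * GG τ σ z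

/-- denominator -/
noncomputable def FD (τ σ z : ℂ) : ℂ :=
  GG (-1 / τ) (σ / τ) (z / τ) * GG (-(τ / σ)) (-1 / σ) (-(τ / σ) + -1 / σ - (z - τ) / σ) *
    GG τ σ (τ + σ - z)

lemma im_aux {τ σ : ℂ} (h : 0 < (σ / τ).im) : 0 < (-(τ / σ)).im := by
  have := neg_inv_im_pos h
  rwa [show -1 / (σ / τ) = -(τ / σ) by rw [div_div_eq_mul_div]; ring] at this

lemma F_orders {τ σ : ℂ} (hτ : 0 < τ.im) (hσ : 0 < σ.im) (hστ : 0 < (σ / τ).im) (z : ℂ) :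
    Good (FN τ σ) ∧ Good (FD τ σ) ∧ analyticOrderAt (FN τ σ) z = analyticOrderAt (FD τ σ) z := by
  have h0 : τ ≠ 0 := by rintro rfl; simp at hτ
  have h1 : σ ≠ 0 := by rintro rfl; simp at hσ
  have i1 := neg_inv_im_pos hτ
  have i2 := neg_inv_im_pos hσ
  have i3 := im_aux hστ
  set L := {x : ℤ × ℤ × ℤ | (x.1 : ℂ) + x.2.1 * τ + x.2.2 * σ = z} with hL
  set A : ℤ × ℤ × ℤ → Prop := fun x => 0 ≤ x.1 with hA
  set B : ℤ × ℤ × ℤ → Prop := fun x => 0 < x.2.1 with hB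
  set C : ℤ × ℤ × ℤ → Prop := fun x => 0 < x.2.2 with hC
  have inv1 : -1 / τ ≠ 0 := div_ne_zero (by simp) h0
  have inv2 : 1 / τ ≠ 0 := div_ne_zero (by simp) h0
  have inv3 : -1 / σ ≠ 0 := div_ne_zero (by simp) h1
  have inv4 : 1 / σ ≠ 0 := div_ne_zero (by simp) h1
  obtain ⟨gN1, oN1⟩ := GG_lat i1 hστ (fun z => -1 / τ + σ / τ - z / τ) (-1 / τ) (-1 / τ + σ / τ)
    inv1 (fun z => by ring) z L (fun x => ¬ A x ∧ C x) (fun n j l => (-(j + 1), -n, l + 1))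
    (fun n j l => by
      simp only [hL, Set.mem_ofPred_eq]; push_cast; field_simp
      constructor <;> intro h <;> first | linear_combination h | linear_combination -h)
    (fun ⟨a, b, c⟩ => by
      simp only [hA, hC, Prod.mk.injEq]
      constructor
      · rintro ⟨h1, h2⟩
        exact ⟨-b, (-a - 1).toNat, (c - 1).toNat, by omega, by omega, by omega⟩
      · rintro ⟨n, j, l, h1, h2, h3⟩; omega)
    (fun n j l n' j' l' h => by simp only [Prod.mk.injEq] at h; omega)
  obtain ⟨gD1, oD1⟩ := GG_lat i1 hστ (fun z => z / τ) (1 / τ) 0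
    inv2 (fun z => by ring) z L (fun x => A x ∧ ¬ C x) (fun n j l => ((j : ℤ), n, -(l : ℤ)))
    (fun n j l => by
      simp only [hL, Set.mem_ofPred_eq]; push_cast; field_simp
      constructor <;> intro h <;> first | linear_combination h | linear_combination -h)
    (fun ⟨a, b, c⟩ => by
      simp only [hA, hC, Prod.mk.injEq]
      constructor
      · rintro ⟨h1, h2⟩
        exact ⟨b, a.toNat, (-c).toNat, by omega, by omega, by omega⟩
      · rintro ⟨n, j, l, h1, h2, h3⟩; omega)
    (fun n j l n' j' l' h => by simp only [Prod.mk.injEq] at h; omega)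
  obtain ⟨gD2, oD2⟩ := GG_lat i3 i2 (fun z => (z - τ) / σ) (1 / σ) (-τ / σ)
    inv4 (fun z => by ring) z L (fun x => A x ∧ B x) (fun n j l => ((l : ℤ), (j : ℤ) + 1, n))
    (fun n j l => by
      simp only [hL, Set.mem_ofPred_eq]; push_cast; field_simp
      constructor <;> intro h <;> first | linear_combination h | linear_combination -h)
    (fun ⟨a, b, c⟩ => by
      simp only [hA, hB, Prod.mk.injEq]
      constructor
      · rintro ⟨h1, h2⟩
        exact ⟨c, (b - 1).toNat, a.toNat, by omega, by omega, by omega⟩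
      · rintro ⟨n, j, l, h1, h2, h3⟩; omega)
    (fun n j l n' j' l' h => by simp only [Prod.mk.injEq] at h; omega)
  obtain ⟨gN2, oN2⟩ := GG_lat i3 i2 (fun z => -(τ / σ) + -1 / σ - (z - τ) / σ) (-1 / σ) (-1 / σ)
    inv3 (fun z => by ring) z L (fun x => ¬ A x ∧ ¬ B x)
    (fun n j l => (-((l : ℤ) + 1), -(j : ℤ), -n))
    (fun n j l => by
      simp only [hL, Set.mem_ofPred_eq]; push_cast; field_simp
      constructor <;> intro h <;> first | linear_combination h | linear_combination -h)
    (fun ⟨a, b, c⟩ => by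
      simp only [hA, hB, Prod.mk.injEq]
      constructor
      · rintro ⟨h1, h2⟩
        exact ⟨-c, (-b).toNat, (-a - 1).toNat, by omega, by omega, by omega⟩
      · rintro ⟨n, j, l, h1, h2, h3⟩; omega)
    (fun n j l n' j' l' h => by simp only [Prod.mk.injEq] at h; omega)
  obtain ⟨gD, oD⟩ := GG_lat hτ hσ (fun z => z) 1 0
    one_ne_zero (fun z => by ring) z L (fun x => ¬ B x ∧ ¬ C x)
    (fun n j l => (n, -(j : ℤ), -(l : ℤ)))
    (fun n j l => by
      simp only [hL, Set.mem_ofPred_eq]; push_cast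
      constructor <;> intro h <;> first | linear_combination h | linear_combination -h)
    (fun ⟨a, b, c⟩ => by
      simp only [hC, hB, Prod.mk.injEq]
      constructor
      · rintro ⟨h1, h2⟩
        exact ⟨a, (-b).toNat, (-c).toNat, by omega, by omega, by omega⟩
      · rintro ⟨n, j, l, h1, h2, h3⟩; omega)
    (fun n j l n' j' l' h => by simp only [Prod.mk.injEq] at h; omega)
  obtain ⟨gN, oN⟩ := GG_lat hτ hσ (fun z => τ + σ - z) (-1) (τ + σ)
    (by simp) (fun z => by ring) z L (fun x => B x ∧ C x)
    (fun n j l => (-n, (j : ℤ) + 1, (l : ℤ) + 1))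
    (fun n j l => by
      simp only [hL, Set.mem_ofPred_eq]; push_cast
      constructor <;> intro h <;> first | linear_combination h | linear_combination -h)
    (fun ⟨a, b, c⟩ => by
      simp only [hC, hB, Prod.mk.injEq]
      constructor
      · rintro ⟨h1, h2⟩
        exact ⟨-a, (b - 1).toNat, (c - 1).toNat, by omega, by omega, by omega⟩
      · rintro ⟨n, j, l, h1, h2, h3⟩; omega)
    (fun n j l n' j' l' h => by simp only [Prod.mk.injEq] at h; omega)
  obtain ⟨g1, e1⟩ := order_mul3 gN1 gD2 gD z
  obtain ⟨g2, e2⟩ := order_mul3 gD1 gN2 gN z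
  refine ⟨g1, g2, ?_⟩
  rw [oN1, oD2, oD] at e1
  rw [oD1, oN2, oN] at e2
  exact e1.trans ((encard_comb L A B C).trans e2.symm)

/-- shift by `σ` -/
lemma F_shift_σ {τ σ : ℂ} (hτ : 0 < τ.im) (hσ : 0 < σ.im) (hστ : 0 < (σ / τ).im) (z : ℂ) :
    FN τ σ (z + σ) * FD τ σ z * th τ z =
      th (-1 / τ) (z / τ) * FN τ σ z * FD τ σ (z + σ) := by
  have h0 : τ ≠ 0 := by rintro rfl; simp at hτ
  have h1 : σ ≠ 0 := by rintro rfl; simp at hσ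
  have i1 := neg_inv_im_pos hτ
  have a1 := GG_step2 i1 hστ (-1 / τ + σ / τ - (z + σ) / τ)
  have a2 := GG_step2 i1 hστ (z / τ)
  have a3 := GG_step2 hτ hσ z
  have a4 := GG_step2 hτ hσ (τ + σ - (z + σ))
  have a5 := GG_add_one (-(τ / σ)) (-1 / σ) ((z - τ) / σ)
  have a6 := GG_add_one (-(τ / σ)) (-1 / σ) (-(τ / σ) + -1 / σ - (z + σ - τ) / σ)
  rw [show -1 / τ + σ / τ - (z + σ) / τ + σ / τ = -1 / τ + σ / τ - z / τ by ring,
    show ph (-1 / τ) (-1 / τ + σ / τ - (z + σ) / τ) = ph (-1 / τ) (-1 / τ - z / τ) by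
      congr 1; ring] at a1
  rw [show z / τ + σ / τ = (z + σ) / τ by ring] at a2
  rw [show τ + σ - (z + σ) + σ = τ + σ - z by ring,
    show ph τ (τ + σ - (z + σ)) = ph τ (τ - z) by congr 1; ring] at a4
  rw [show (z - τ) / σ + 1 = (z + σ - τ) / σ by field_simp; ring] at a5
  rw [show -(τ / σ) + -1 / σ - (z + σ - τ) / σ + 1 = -(τ / σ) + -1 / σ - (z - τ) / σ by
    field_simp; ring] at a6
  unfold FN FD th
  rw [a1, a2, a3, a4, a5, a6]
  ring

/-- shift by `τ` -/
lemma F_shift_τ {τ σ : ℂ} (hτ : 0 < τ.im) (hσ : 0 < σ.im) (hστ : 0 < (σ / τ).im) (z : ℂ) :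
    FN τ σ (z + τ) * FD τ σ z * th σ z =
      th (-1 / σ) (z / σ) * FN τ σ z * FD τ σ (z + τ) := by
  have h0 : τ ≠ 0 := by rintro rfl; simp at hτ
  have h1 : σ ≠ 0 := by rintro rfl; simp at hσ
  have i2 := neg_inv_im_pos hσ
  have i3 := im_aux hστ
  have a1 := GG_step1 i3 i2 (-(τ / σ) + -1 / σ - (z - τ) / σ)
  have a2 := GG_step1 i3 i2 ((z + τ - τ) / σ)
  have a3 := GG_step1 hτ hσ z
  have a4 := GG_step1 hτ hσ (τ + σ - (z + τ))
  have a5 := GG_add_one (-1 / τ) (σ / τ) (z / τ)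
  have a6 := GG_add_one (-1 / τ) (σ / τ) (-1 / τ + σ / τ - (z + τ) / τ)
  rw [show -(τ / σ) + -1 / σ - (z - τ) / σ + -(τ / σ) = -(τ / σ) + -1 / σ - (z + τ - τ) / σ by ring,
    show ph (-1 / σ) (-(τ / σ) + -1 / σ - (z - τ) / σ) = ph (-1 / σ) (-1 / σ - z / σ) by
      congr 1; ring] at a1
  rw [show (z + τ - τ) / σ + -(τ / σ) = (z - τ) / σ by ring,
    show ph (-1 / σ) ((z + τ - τ) / σ) = ph (-1 / σ) (z / σ) by congr 1; ring] at a2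
  rw [show τ + σ - (z + τ) + τ = τ + σ - z by ring,
    show ph σ (τ + σ - (z + τ)) = ph σ (σ - z) by congr 1; ring] at a4
  rw [show z / τ + 1 = (z + τ) / τ by field_simp] at a5
  rw [show -1 / τ + σ / τ - (z + τ) / τ + 1 = -1 / τ + σ / τ - z / τ by
    field_simp; ring] at a6
  unfold FN FD th
  rw [a1, a2, a3, a4, a5, a6]
  ring

lemma F_reflect {τ σ : ℂ} (hτ : 0 < τ.im) (hσ : 0 < σ.im) (z : ℂ) :
    FN τ σ (τ + σ - 1 - z) = FD τ σ z := by
  have h0 : τ ≠ 0 := by rintro rfl; simp at hτ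
  have h1 : σ ≠ 0 := by rintro rfl; simp at hσ
  have a1 := GG_add_one (-1 / τ) (σ / τ) (-1 / τ + σ / τ - (τ + σ - 1 - z) / τ)
  have a2 := GG_add_one (-(τ / σ)) (-1 / σ) (-(τ / σ) + -1 / σ - (z - τ) / σ)
  have a3 := GG_add_one τ σ (τ + σ - 1 - z)
  rw [show -1 / τ + σ / τ - (τ + σ - 1 - z) / τ + 1 = z / τ by field_simp; ring] at a1
  rw [show -(τ / σ) + -1 / σ - (z - τ) / σ + 1 = (τ + σ - 1 - z - τ) / σ by field_simp; ring] at a2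
  rw [show τ + σ - 1 - z + 1 = τ + σ - z by ring] at a3
  unfold FN FD
  rw [a1, a2, a3]

/-- the key identity, in terms of entire functions -/
lemma F_identity {τ σ : ℂ} (hτ : 0 < τ.im) (hσ : 0 < σ.im) (hστ : 0 < (σ / τ).im) :
    ∃ n m e : ℤ, ∀ z, FN τ σ z = ex ((z - (τ + σ - 1) / 2) ^ 3 / (3 * τ * σ) +
      (((1 / 2 + 1 / (2 * τ) + τ / 2 + 2 * n) / 3 - ((τ + σ - 1) / 2) ^ 2 / τ
        + ((τ + σ - 1) / 2) * σ / τ - σ ^ 2 / (3 * τ) + 2 * m) / σ) * (z - (τ + σ - 1) / 2) + e) *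
      FD τ σ z := by
  have h0 : τ ≠ 0 := by rintro rfl; simp at hτ
  have h1 : σ ≠ 0 := by rintro rfl; simp at hσ
  have gN := (F_orders hτ hσ hστ 0).1
  have gD := (F_orders hτ hσ hστ 0).2.1
  obtain ⟨U, hU, hU0, hUe⟩ := quotient_entire gN gD (fun z => (F_orders hτ hσ hστ z).2.2)
  have gτ : Good (fun z => th τ z) := by simpa using th_good hτ 1 one_ne_zero
  have gσ : Good (fun z => th σ z) := by simpa using th_good hσ 1 one_ne_zero
  obtain ⟨n, hn⟩ := theta_S hτ
  obtain ⟨n', hn'⟩ := theta_S hσ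
  set r : ℂ := (1 / 2 + 1 / (2 * τ) + τ / 2 + 2 * n) / 3 with hr
  set r' : ℂ := (1 / 2 + 1 / (2 * σ) + σ / 2 + 2 * n') / 3 with hr'
  set M : ℂ := (τ + σ - 1) / 2 with hM
  have cU := hU.continuous
  have cex := differentiable_ex.continuous
  have s1 : ∀ z, U (z + σ) = ex (z ^ 2 / τ + z * (1 / τ - 1) + r) * U z := by
    apply ((gD.mul (gD.shift σ)).mul gτ).cancel
    · fun_prop
    · fun_prop
    · intro z
      have := F_shift_σ hτ hσ hστ z
      rw [hUe, hUe, hn] at this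
      linear_combination this
  have s2 : ∀ z, U (z + τ) = ex (z ^ 2 / σ + z * (1 / σ - 1) + r') * U z := by
    apply ((gD.mul (gD.shift τ)).mul gσ).cancel
    · fun_prop
    · fun_prop
    · intro z
      have := F_shift_τ hτ hσ hστ z
      rw [hUe, hUe, hn'] at this
      linear_combination this
  have s3 : ∀ z, U (2 * M - z) * U z = 1 := by
    have : ∀ z, U (2 * M - z) * U z = (fun _ => (1 : ℂ)) z := by
      apply gD.cancel
      · fun_prop
      · fun_prop
      · intro z
        have e1 := F_reflect hτ hσ z
        have e2 := F_reflect hτ hσ (τ + σ - 1 - z)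
        rw [show τ + σ - 1 - (τ + σ - 1 - z) = z by ring] at e2
        rw [hUe, ← e2, hUe] at e1
        rw [show 2 * M - z = τ + σ - 1 - z by rw [hM]; ring]
        linear_combination e1
    exact this
  set ρ : ℂ := r - M ^ 2 / τ + M * σ / τ - σ ^ 2 / (3 * τ) with hρ
  set ρ' : ℂ := r' - M ^ 2 / σ + M * τ / σ - τ ^ 2 / (3 * σ) with hρ'
  have t1 : ∀ z, U (z + σ) * ex (-((z + σ - M) ^ 3 / (3 * τ * σ))) =
      ex ρ * (U z * ex (-((z - M) ^ 3 / (3 * τ * σ)))) := by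
    intro z
    rw [s1]
    have : ex (z ^ 2 / τ + z * (1 / τ - 1) + r) * ex (-((z + σ - M) ^ 3 / (3 * τ * σ))) =
        ex ρ * ex (-((z - M) ^ 3 / (3 * τ * σ))) := by
      rw [← ex_add, ← ex_add]
      congr 1
      rw [hρ, hM]
      field_simp
      ring
    linear_combination U z * this
  have t2 : ∀ z, U (z + τ) * ex (-((z + τ - M) ^ 3 / (3 * τ * σ))) =
      ex ρ' * (U z * ex (-((z - M) ^ 3 / (3 * τ * σ)))) := by
    intro z
    rw [s2]
    have : ex (z ^ 2 / σ + z * (1 / σ - 1) + r') * ex (-((z + τ - M) ^ 3 / (3 * τ * σ))) =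
        ex ρ' * ex (-((z - M) ^ 3 / (3 * τ * σ))) := by
      rw [← ex_add, ← ex_add]
      congr 1
      rw [hρ', hM]
      field_simp
      ring
    linear_combination U z * this
  obtain ⟨c, hc⟩ := quasi_periodic_exp (E := fun z => U z * ex (-((z - M) ^ 3 / (3 * τ * σ))))
    (by fun_prop) (fun z => mul_ne_zero (hU0 z) (ex_ne_zero _)) hστ t2 t1
  have hE0 : U M * ex (-((M - M) ^ 3 / (3 * τ * σ))) ≠ 0 := mul_ne_zero (hU0 _) (ex_ne_zero _)
  have hcσ : Complex.exp (c * σ) = ex ρ := by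
    have e1 := hc (M + σ) M
    rw [t1 M] at e1
    rw [show M + σ - M = σ by ring] at e1
    apply mul_right_cancel₀ hE0
    linear_combination -e1
  rw [ex, Complex.exp_eq_exp_iff_exists_int] at hcσ
  obtain ⟨m, hm⟩ := hcσ
  have hUM : U M = 1 ∨ U M = -1 := by
    have := s3 M
    rw [show 2 * M - M = M by ring, mul_self_eq_one_iff] at this
    exact this
  obtain ⟨e, he⟩ : ∃ e : ℤ, U M = ex e := by
    rcases hUM with h | h
    · exact ⟨0, by simp [h, ex_zero]⟩
    · exact ⟨1, by simp [h, ex_one]⟩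
  refine ⟨n, m, e, fun z => ?_⟩
  rw [hUe]
  congr 1
  have e1 := hc z M
  simp only [sub_self, ne_eq, OfNat.ofNat_ne_zero, not_false_eq_true, zero_pow, zero_div, neg_zero,
    ex_zero, mul_one] at e1
  have e2 : Complex.exp (c * (z - M)) = ex ((ρ + 2 * m) / σ * (z - M)) := by
    rw [ex]
    congr 1
    have : c = Real.pi * Complex.I * ((ρ + 2 * m) / σ) := by
      field_simp
      linear_combination hm
    rw [this]; ring
  rw [e2, he] at e1
  rw [ex_add, ex_add]
  have e3 : ex (-((z - M) ^ 3 / (3 * τ * σ))) * ex ((z - M) ^ 3 / (3 * τ * σ)) = 1 := by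
    rw [← ex_add, neg_add_cancel, ex_zero]
  linear_combination (ex ((z - M) ^ 3 / (3 * τ * σ))) * e1 - U z * e3

lemma gamma_eq {t s : ℂ} (ht : 0 < t.im) (hs : 0 < s.im) (z : ℂ) (h : EGFactorsNeZero z t s) :
    ellipticGamma z t s = GG t s (t + s - z) / GG t s z ∧ GG t s z ≠ 0 ∧
      GG t s (t + s - z) ≠ 0 := by
  have e1 : ∀ p : ℕ × ℕ, qexp t ^ (p.1 + 1) * qexp s ^ (p.2 + 1) *
      Complex.exp (-(2 * Real.pi * Complex.I) * z) =
      ee ((p.1 : ℂ) * t + (p.2 : ℂ) * s + (t + s - z)) := by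
    intro p
    have : (p.1 : ℂ) * t + (p.2 : ℂ) * s + (t + s - z) =
      ((p.1 + 1 : ℕ) : ℂ) * t + ((p.2 + 1 : ℕ) : ℂ) * s + -z := by push_cast; ring
    rw [this, ee_add, ee_add, ee_nat_mul, ee_nat_mul]
    unfold qexp ee
    congr 2
    ring
  have e2 : ∀ p : ℕ × ℕ, qexp t ^ p.1 * qexp s ^ p.2 * Complex.exp (2 * Real.pi * Complex.I * z) =
      ee ((p.1 : ℂ) * t + (p.2 : ℂ) * s + z) := by
    intro p
    rw [ee_add, ee_add, ee_nat_mul, ee_nat_mul]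
    rfl
  have n1 : GG t s (t + s - z) ≠ 0 := by
    apply PP_ne_zero (GG_summable ht hs)
    intro p hp
    have := (h p.1 p.2).1
    rw [e1 p, hp] at this
    simp at this
  have n2 : GG t s z ≠ 0 := by
    apply PP_ne_zero (GG_summable ht hs)
    intro p hp
    have := (h p.1 p.2).2
    rw [e2 p, hp] at this
    simp at this
  refine ⟨?_, n2, n1⟩
  unfold ellipticGamma
  rw [tprod_congr (fun p => by rw [e1 p, e2 p])]
  exact (PP_multipliable (GG_summable ht hs) (t + s - z)).tprod_div₀
    (PP_multipliable (GG_summable ht hs) z) n2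

/-- modular three-term relation for the elliptic gamma function, with a
multiplier `e^{iπQ(z)}` where `Q` is a cubic polynomial whose coefficients are rational
functions of `τ` and `σ` with rational coefficients. -/
theorem ellipticGamma_modular_three_term
    (τ σ : ℂ) (hτ : τ ∈ UHP) (hσ : σ ∈ UHP) (hστ : σ / τ ∈ UHP) :
    ∃ num den : Fin 4 → MvPolynomial (Fin 2) ℚ,
      (∀ i, MvPolynomial.aeval ![τ, σ] (den i) ≠ 0) ∧
      ∀ z : ℂ,
        EGFactorsNeZero (z / τ) (-1 / τ) (σ / τ) →
        EGFactorsNeZero ((z - τ) / σ) (-(τ / σ)) (-1 / σ) →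
        EGFactorsNeZero z τ σ →
        ellipticGamma (z / τ) (-1 / τ) (σ / τ) =
          Complex.exp (Real.pi * Complex.I *
              ∑ i : Fin 4,
                (MvPolynomial.aeval ![τ, σ] (num i) / MvPolynomial.aeval ![τ, σ] (den i)) *
                  z ^ (i : ℕ)) *
            ellipticGamma ((z - τ) / σ) (-(τ / σ)) (-1 / σ) * ellipticGamma z τ σ := by
  have hτ' : 0 < τ.im := hτ
  have hσ' : 0 < σ.im := hσ
  have hστ' : 0 < (σ / τ).im := hστ
  have h0 : τ ≠ 0 := by rintro rfl; simp at hτ'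
  have h1 : σ ≠ 0 := by rintro rfl; simp at hσ'
  obtain ⟨n, m, e, H⟩ := F_identity hτ' hσ' hστ'
  -- the center `M` and the linear coefficient `R / (12 τ σ)` as polynomials
  let X : MvPolynomial (Fin 2) ℚ := MvPolynomial.X 0
  let Y : MvPolynomial (Fin 2) ℚ := MvPolynomial.X 1
  let M : MvPolynomial (Fin 2) ℚ := MvPolynomial.C (1 / 2) * (X + Y - 1)
  let R : MvPolynomial (Fin 2) ℚ := 2 * X + 2 + 2 * X ^ 2 + 8 * (n : MvPolynomial (Fin 2) ℚ) * X
    - 12 * M ^ 2 + 12 * M * Y - 4 * Y ^ 2 + 24 * (m : MvPolynomial (Fin 2) ℚ) * X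
  refine ⟨![-4 * M ^ 3 - R * M + 12 * (e : MvPolynomial (Fin 2) ℚ) * X * Y, 12 * M ^ 2 + R,
    -12 * M, 4], fun _ => 12 * X * Y, fun _ => ?_, fun z k1 k2 k3 => ?_⟩
  · simp [X, Y, h0, h1]
  · obtain ⟨f1, d1, m1⟩ := gamma_eq (neg_inv_im_pos hτ') hστ' _ k1
    obtain ⟨f2, d2, m2⟩ := gamma_eq (im_aux hστ') (neg_inv_im_pos hσ') _ k2
    obtain ⟨f3, d3, m3⟩ := gamma_eq hτ' hσ' _ k3
    have Hz := H z
    rw [f1, f2, f3]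
    have hQ : Complex.exp (Real.pi * Complex.I *
              ∑ i : Fin 4,
                (MvPolynomial.aeval ![τ, σ] ((![-4 * M ^ 3 - R * M +
                  12 * (e : MvPolynomial (Fin 2) ℚ) * X * Y, 12 * M ^ 2 + R,
                  -12 * M, 4] : Fin 4 → MvPolynomial (Fin 2) ℚ) i) /
                  MvPolynomial.aeval ![τ, σ] (12 * X * Y)) *
                  z ^ (i : ℕ)) = ex ((z - (τ + σ - 1) / 2) ^ 3 / (3 * τ * σ) +
      (((1 / 2 + 1 / (2 * τ) + τ / 2 + 2 * n) / 3 - ((τ + σ - 1) / 2) ^ 2 / τ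
        + ((τ + σ - 1) / 2) * σ / τ - σ ^ 2 / (3 * τ) + 2 * m) / σ) * (z - (τ + σ - 1) / 2) + e) := by
      unfold ex
      congr 2
      have aX : MvPolynomial.aeval ![τ, σ] X = τ := by simp [X]
      have aY : MvPolynomial.aeval ![τ, σ] Y = σ := by simp [Y]
      have aM : MvPolynomial.aeval ![τ, σ] M = (τ + σ - 1) / 2 := by
        simp only [M, map_mul, map_sub, map_add, aX, aY, map_one, MvPolynomial.aeval_C]
        simp; ring
      have aR : MvPolynomial.aeval ![τ, σ] R = 2 * τ + 2 + 2 * τ ^ 2 + 8 * n * τ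
          - 12 * ((τ + σ - 1) / 2) ^ 2 + 12 * ((τ + σ - 1) / 2) * σ - 4 * σ ^ 2 + 24 * m * τ := by
        simp only [R, map_mul, map_sub, map_add, map_pow, aX, aY, aM, map_ofNat, map_intCast]
      simp only [Fin.sum_univ_four, Matrix.cons_val, map_add, map_sub, map_mul, map_neg, map_pow,
        map_ofNat, map_intCast, aX, aY, aM, aR]
      simp
      field_simp
      ring
    rw [hQ]
    unfold FN FD at Hz
    have key : ∀ N1 D1 N2 D2 N D x : ℂ, D1 ≠ 0 → D2 ≠ 0 → D ≠ 0 →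
        N1 * D2 * D = x * (D1 * N2 * N) → N1 / D1 = x * (N2 / D2) * (N / D) := by
      intro N1 D1 N2 D2 N D x h1 h2 h3 h
      field_simp
      linear_combination h
    exact key _ _ _ _ _ _ _ d1 d2 d3 Hz
end

section
/- For every z ∈ ℂ which is not a nonpositive integer, the Euler gamma function is recovered from the elliptic gamma function by the iterated limit Γ(z) = lim_{σ→0} lim_{τ→i∞} θ₀(σ,τ)^{1−z} · Γ(σz, τ, σ)/Γ(σ, τ, σ), where the inner limit is taken as Im τ → ∞, the outer limit is taken as σ → 0 along the positive imaginary axis, and the complex power θ₀(σ,τ)^{1−z} is taken with the principal branch of the logarithm. -/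
open Complex Filter Topology

lemma aux_tprod_gamma (r w : ℂ) (hr : ‖r‖ < 1) (hw : w ≠ 0) :
    Tendsto (fun q : ℂ => ∏' p : ℕ × ℕ,
      (1 - q ^ (p.1 + 1) * r ^ (p.2 + 1) * w⁻¹) / (1 - q ^ p.1 * r ^ p.2 * w))
      (𝓝 0) (𝓝 (∏' l : ℕ, (1 - r ^ l * w)⁻¹)) := by
  have hlim : Tendsto (fun l : ℕ => ‖(1 - r ^ l * w)⁻¹‖) atTop (𝓝 ‖(1 - 0 * w)⁻¹‖) := by
    refine (Tendsto.inv₀ ?_ (by simp)).norm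
    exact tendsto_const_nhds.sub ((tendsto_pow_atTop_nhds_zero_of_norm_lt_one hr).mul_const w)
  obtain ⟨C, hC⟩ := hlim.bddAbove_range
  have hC' : ∀ l : ℕ, ‖(1 - r ^ l * w)⁻¹‖ ≤ C := fun l => hC ⟨l, rfl⟩
  set M : ℝ := max C 2 with hM
  have hM2 : 2 ≤ M := le_max_right _ _
  set K : ℝ := ‖w⁻¹‖ + ‖w‖ with hK
  set bd : ℕ × ℕ → ℝ := fun p => ((1 / 2 : ℝ) ^ p.1 * ‖r‖ ^ p.2) * (M * K) with hbd
  have hsum : Summable bd := by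
    refine Summable.mul_right _ ?_
    exact Summable.mul_of_nonneg (summable_geometric_of_lt_one (by norm_num) (by norm_num))
      (summable_geometric_of_lt_one (norm_nonneg _) hr) (fun _ => by positivity)
      (fun _ => by positivity)
  set g : ℕ × ℕ → ℂ := fun p => (if p.1 = 0 then (1 - r ^ p.2 * w)⁻¹ else 1) - 1 with hg
  have key := tendsto_tprod_one_add_of_dominated_convergence (𝓕 := 𝓝 (0 : ℂ))
    (f := fun q p => (1 - q ^ (p.1 + 1) * r ^ (p.2 + 1) * w⁻¹) / (1 - q ^ p.1 * r ^ p.2 * w) - 1)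
    (g := g) (bound := bd) hsum ?_ ?_
  · have e1 : (∏' p, (1 + g p)) = ∏' l : ℕ, (1 - r ^ l * w)⁻¹ := by
      have hinj : Function.Injective (fun l : ℕ => ((0 : ℕ), l)) := fun a b h => by simpa using h
      rw [← hinj.tprod_eq (f := fun p => 1 + g p)]
      · simp [hg]
      · intro p hp
        by_cases h0 : p.1 = 0
        · exact ⟨p.2, by ext <;> simp [h0]⟩
        · simp [hg, h0] at hp
    rw [e1] at key
    simpa using key
  · rintro ⟨j, l⟩
    simp only [hg]
    refine Tendsto.sub_const ?_ 1
    rcases Nat.eq_zero_or_pos j with rfl | hj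
    · simp only [pow_zero, one_mul, if_true, zero_add, pow_one]
      have : ContinuousAt (fun q : ℂ => (1 - q * r ^ (l + 1) * w⁻¹) * (1 - r ^ l * w)⁻¹) 0 := by
        fun_prop
      simpa [ContinuousAt, div_eq_mul_inv] using this
    · have hj0 : j ≠ 0 := hj.ne'
      simp only [hj0, if_false]
      have : ContinuousAt (fun q : ℂ => (1 - q ^ (j + 1) * r ^ (l + 1) * w⁻¹) /
          (1 - q ^ j * r ^ l * w)) 0 := by
        refine ContinuousAt.div (by fun_prop) (by fun_prop) (by simp [hj0])
      simpa [ContinuousAt, hj0] using this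
  · have h1 : ∀ᶠ q : ℂ in 𝓝 0, ‖q‖ < 1 / 2 := by
      have : ContinuousAt (fun q : ℂ => ‖q‖) 0 := by fun_prop
      exact this.eventually (gt_mem_nhds (by simp))
    have h2 : ∀ᶠ q : ℂ in 𝓝 0, ‖q‖ * ‖w‖ < 1 / 2 := by
      have : ContinuousAt (fun q : ℂ => ‖q‖ * ‖w‖) 0 := by fun_prop
      exact this.eventually (gt_mem_nhds (by simp))
    filter_upwards [h1, h2] with q hq1 hq2
    rintro ⟨j, l⟩
    simp only [hbd]
    set a := q ^ (j + 1) * r ^ (l + 1) * w⁻¹ with ha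
    set b := q ^ j * r ^ l * w with hb
    have hqj : ‖q‖ ^ j ≤ (1 / 2) ^ j := pow_le_pow_left₀ (norm_nonneg _) hq1.le j
    have na : ‖a‖ ≤ ((1 / 2 : ℝ) ^ j * ‖r‖ ^ l) * ‖w⁻¹‖ := by
      rw [ha, norm_mul, norm_mul, norm_pow, norm_pow]
      refine mul_le_mul_of_nonneg_right ?_ (norm_nonneg _)
      refine mul_le_mul ?_ ?_ (by positivity) (by positivity)
      · refine le_trans ?_ hqj
        exact pow_le_pow_of_le_one (norm_nonneg _) (by linarith) (by omega)
      · exact pow_le_pow_of_le_one (norm_nonneg _) hr.le (by omega)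
    have nb : ‖b‖ ≤ ((1 / 2 : ℝ) ^ j * ‖r‖ ^ l) * ‖w‖ := by
      rw [hb, norm_mul, norm_mul, norm_pow, norm_pow]
      gcongr
    have nab : ‖b - a‖ ≤ ((1 / 2 : ℝ) ^ j * ‖r‖ ^ l) * K := by
      refine (norm_sub_le _ _).trans ?_
      rw [hK, mul_add]; linarith
    by_cases h0 : 1 - b = 0
    · rw [h0, div_zero, zero_sub, norm_neg, norm_one]
      have hb1 : b = 1 := (sub_eq_zero.mp h0).symm
      rw [hb1, norm_one] at nb
      have : ((1 / 2 : ℝ) ^ j * ‖r‖ ^ l) * ‖w‖ ≤ ((1 / 2 : ℝ) ^ j * ‖r‖ ^ l) * (M * K) := by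
        refine mul_le_mul_of_nonneg_left ?_ (by positivity)
        have : ‖w‖ ≤ K := by rw [hK]; linarith [norm_nonneg w⁻¹]
        nlinarith [norm_nonneg w]
      linarith
    · have e : (1 - a) / (1 - b) - 1 = (1 - b)⁻¹ * (b - a) := by field_simp; ring
      rw [e, norm_mul]
      have hinv : ‖(1 - b)⁻¹‖ ≤ M := by
        rcases Nat.eq_zero_or_pos j with rfl | hj
        · have := hC' l
          simp only [hb, pow_zero, one_mul]
          exact this.trans (le_max_left _ _)
        · have hb2 : ‖b‖ ≤ 1 / 2 := by
            rw [hb, norm_mul, norm_mul, norm_pow, norm_pow]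
            have t1 : ‖q‖ ^ j ≤ ‖q‖ := pow_le_of_le_one (norm_nonneg _) (by linarith) hj.ne'
            have t2 : ‖r‖ ^ l ≤ 1 := pow_le_one₀ (norm_nonneg _) hr.le
            calc ‖q‖ ^ j * ‖r‖ ^ l * ‖w‖ ≤ ‖q‖ * 1 * ‖w‖ := by gcongr
              _ ≤ 1 / 2 := by linarith
          have : (1 / 2 : ℝ) ≤ ‖1 - b‖ := by
            have := norm_sub_norm_le (1 : ℂ) b
            rw [norm_one] at this; linarith
          rw [norm_inv]
          calc ‖1 - b‖⁻¹ ≤ (1 / 2 : ℝ)⁻¹ := by gcongr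
            _ ≤ M := by norm_num; exact hM2
      calc ‖(1 - b)⁻¹‖ * ‖b - a‖ ≤ M * (((1 / 2 : ℝ) ^ j * ‖r‖ ^ l) * K) := by gcongr
        _ = _ := by ring

lemma aux_tprod_theta (r : ℂ) :
    Tendsto (fun q : ℂ => ∏' j : ℕ,
      ((1 - q ^ (j + 1) * r⁻¹) * (1 - q ^ j * r)))
      (𝓝 0) (𝓝 (1 - r)) := by
  set K : ℝ := ‖r⁻¹‖ + ‖r‖ + ‖r⁻¹‖ * ‖r‖ with hK
  set bd : ℕ → ℝ := fun j => (1 / 2 : ℝ) ^ j * K with hbd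
  have hsum : Summable bd :=
    Summable.mul_right _ (summable_geometric_of_lt_one (by norm_num) (by norm_num))
  set g : ℕ → ℂ := fun j => (if j = 0 then 1 - r else 1) - 1 with hg
  have key := tendsto_tprod_one_add_of_dominated_convergence (𝓕 := 𝓝 (0 : ℂ))
    (f := fun q j => (1 - q ^ (j + 1) * r⁻¹) * (1 - q ^ j * r) - 1)
    (g := g) (bound := bd) hsum ?_ ?_
  · have e1 : (∏' p, (1 + g p)) = 1 - r := by
      rw [tprod_eq_mulSingle 0]
      · simp only [hg, if_true]; ring
      · intro b hb
        simp [hg, hb]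
    rw [e1] at key
    simpa using key
  · intro j
    simp only [hg]
    refine Tendsto.sub_const ?_ 1
    have : ContinuousAt (fun q : ℂ => (1 - q ^ (j + 1) * r⁻¹) * (1 - q ^ j * r)) 0 := by fun_prop
    rcases Nat.eq_zero_or_pos j with rfl | hj
    · simpa [ContinuousAt] using this
    · simpa [ContinuousAt, hj.ne'] using this
  · have h1 : ∀ᶠ q : ℂ in 𝓝 0, ‖q‖ < 1 / 2 := by
      have : ContinuousAt (fun q : ℂ => ‖q‖) 0 := by fun_prop
      exact this.eventually (gt_mem_nhds (by simp))
    filter_upwards [h1] with q hq1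
    intro j
    simp only [hbd]
    set a := q ^ (j + 1) * r⁻¹ with ha
    set b := q ^ j * r with hb
    have hqj : ‖q‖ ^ j ≤ (1 / 2) ^ j := pow_le_pow_left₀ (norm_nonneg _) hq1.le j
    have na : ‖a‖ ≤ (1 / 2 : ℝ) ^ j * ‖r⁻¹‖ := by
      rw [ha, norm_mul, norm_pow]
      refine mul_le_mul_of_nonneg_right ?_ (norm_nonneg _)
      exact le_trans (pow_le_pow_of_le_one (norm_nonneg _) (by linarith) (by omega)) hqj
    have nb : ‖b‖ ≤ (1 / 2 : ℝ) ^ j * ‖r‖ := by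
      rw [hb, norm_mul, norm_pow]
      gcongr
    have nb' : ‖b‖ ≤ ‖r‖ := by
      refine nb.trans (mul_le_of_le_one_left (norm_nonneg _) (pow_le_one₀ (by norm_num) (by norm_num)))
    have e : (1 - a) * (1 - b) - 1 = -a - b + a * b := by ring
    rw [e]
    calc ‖-a - b + a * b‖ ≤ ‖-a - b‖ + ‖a * b‖ := norm_add_le _ _
      _ ≤ (‖-a‖ + ‖b‖) + ‖a * b‖ := by gcongr; exact norm_sub_le _ _
      _ = ‖a‖ + ‖b‖ + ‖a‖ * ‖b‖ := by rw [norm_neg, norm_mul a b]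
      _ ≤ (1 / 2 : ℝ) ^ j * ‖r⁻¹‖ + (1 / 2 : ℝ) ^ j * ‖r‖ + ((1 / 2 : ℝ) ^ j * ‖r⁻¹‖) * ‖r‖ := by
        gcongr
      _ = _ := by rw [hK]; ring

lemma aux_multipliable_inv (r w : ℂ) (hr : ‖r‖ < 1) :
    Multipliable (fun l : ℕ => (1 - r ^ l * w)⁻¹) := by
  have hlim : Tendsto (fun l : ℕ => ‖(1 - r ^ l * w)⁻¹‖) atTop (𝓝 ‖(1 - 0 * w)⁻¹‖) := by
    refine (Tendsto.inv₀ ?_ (by simp)).norm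
    exact tendsto_const_nhds.sub ((tendsto_pow_atTop_nhds_zero_of_norm_lt_one hr).mul_const w)
  obtain ⟨C, hC⟩ := hlim.bddAbove_range
  have hC' : ∀ l : ℕ, ‖(1 - r ^ l * w)⁻¹‖ ≤ C := fun l => hC ⟨l, rfl⟩
  have hs : Summable (fun l : ℕ => ‖(1 - r ^ l * w)⁻¹ - 1‖) := by
    refine Summable.of_nonneg_of_le (fun _ => norm_nonneg _)
      (f := fun l : ℕ => ‖r‖ ^ l * (‖w‖ * max C 1)) (fun l => ?_)
      ((summable_geometric_of_lt_one (norm_nonneg _) hr).mul_right _)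
    have hb : ‖r‖ ^ l * (‖w‖ * max C 1) = ‖r ^ l * w‖ * max C 1 := by
      rw [norm_mul, norm_pow]; ring
    rw [hb]
    have := hC' l
    set b := r ^ l * w
    by_cases h0 : 1 - b = 0
    · have hb1 : b = 1 := (sub_eq_zero.mp h0).symm
      simp [hb1]
    · have e : (1 - b)⁻¹ - 1 = b * (1 - b)⁻¹ := by field_simp; ring
      rw [e, norm_mul]
      gcongr
      exact this.trans (le_max_left _ _)
  simpa using multipliable_one_add_of_summable hs

lemma aux_telescope (a : ℕ → ℝ) (ha : ∀ n, 0 < a n) (z : ℂ) (N : ℕ) :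
    ∏ n ∈ Finset.range N, ((a (n + 1) / a n : ℝ) : ℂ) ^ z = ((a N / a 0 : ℝ) : ℂ) ^ z := by
  induction N with
  | zero => simp [(ha 0).ne']
  | succ N ih =>
    rw [Finset.prod_range_succ, ih, ← Complex.mul_cpow_ofReal_nonneg
      (div_nonneg (ha _).le (ha _).le) (div_nonneg (ha _).le (ha _).le), ← Complex.ofReal_mul]
    congr 2
    have := (ha N).ne'
    have := (ha 0).ne'
    field_simp

lemma aux_euler (z : ℂ) (hz : ∀ n : ℕ, z ≠ -(n : ℂ)) :
    Tendsto (fun N : ℕ => ∏ n ∈ Finset.range N,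
      (((((n : ℝ) + 1 + 1) / ((n : ℝ) + 1) : ℝ) : ℂ) ^ z / (1 + z / ((n : ℂ) + 1))))
      atTop (𝓝 (z * Complex.Gamma z)) := by
  have h1 := ((Complex.GammaSeq_tendsto_Gamma z).comp (tendsto_add_atTop_nat 1)).const_mul z
  have h2 : Tendsto (fun N : ℕ => 1 + z * (1 / ((N : ℂ) + 1))) atTop (𝓝 (1 + z * 0)) :=
    tendsto_const_nhds.add ((tendsto_one_div_add_atTop_nhds_zero_nat (𝕜 := ℂ)).const_mul z)
  have h3 := h1.mul h2
  simp only [mul_zero, add_zero, mul_one] at h3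
  refine h3.congr (fun N => ?_)
  have hne : ∀ n : ℕ, z + n ≠ 0 := fun n h => hz n (eq_neg_of_add_eq_zero_left h)
  have t := aux_telescope (fun n => (n : ℝ) + 1) (fun n => by positivity) z N
  simp only [Nat.cast_add, Nat.cast_one, Nat.cast_zero, zero_add, div_one] at t
  rw [Finset.prod_div_distrib, t]
  have hp : ∀ N : ℕ, ∏ n ∈ Finset.range N, (1 + z / ((n : ℂ) + 1)) =
      (∏ n ∈ Finset.range N, (z + ((n + 1 : ℕ) : ℂ))) / (Nat.factorial N : ℂ) := by
    intro N
    induction N with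
    | zero => simp
    | succ N ih =>
      rw [Finset.prod_range_succ, ih, Finset.prod_range_succ, Nat.factorial_succ]
      have : ((N : ℂ) + 1) ≠ 0 := by exact_mod_cast Nat.succ_ne_zero N
      have : (Nat.factorial N : ℂ) ≠ 0 := by exact_mod_cast Nat.factorial_ne_zero N
      push_cast
      field_simp
      ring
  rw [hp]
  simp only [Function.comp, Complex.GammaSeq]
  rw [Finset.prod_range_succ, Finset.prod_range_succ', Nat.factorial_succ]
  have e1 : ((N : ℂ) + 1) ≠ 0 := by exact_mod_cast Nat.succ_ne_zero N
  have e2 : (Nat.factorial N : ℂ) ≠ 0 := by exact_mod_cast Nat.factorial_ne_zero N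
  have e3 : ∏ n ∈ Finset.range N, (z + ((n + 1 : ℕ) : ℂ)) ≠ 0 :=
    Finset.prod_ne_zero_iff.mpr (fun n _ => hne _)
  have e4 : z + ((N : ℂ) + 1) ≠ 0 := by have := hne (N + 1); push_cast at this; exact this
  have e5 : z ≠ 0 := by simpa using hz 0
  push_cast at e3 ⊢
  simp only [add_zero]
  field_simp
  ring

lemma aux_lin (a : ℂ) :
    Tendsto (fun s : ℝ => (1 - Complex.exp (-(s * a))) / s) (𝓝[>] 0) (𝓝 a) := by
  have h : HasDerivAt (fun s : ℝ => -Complex.exp (-((s : ℂ) * a))) a 0 := by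
    have h1 : HasDerivAt (fun s : ℝ => -((s : ℂ) * a)) (-(1 * a)) 0 :=
      ((Complex.ofRealCLM.hasDerivAt (x := (0 : ℝ))).mul_const a).neg
    have h2 := h1.cexp.fun_neg
    simpa using h2
  have := hasDerivAt_iff_tendsto_slope.mp h
  have := this.mono_left (nhdsWithin_mono 0 (fun x (hx : 0 < x) => hx.ne'))
  refine this.congr (fun s => ?_)
  simp [slope, div_eq_inv_mul]
  ring

lemma aux_cpow_bound (z : ℂ) (x : ℝ) (hx : 0 ≤ x) (hx1 : x ≤ 1 / 2) (hzx : ‖z‖ * x ≤ 1 / 2) :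
    ‖((1 + x : ℝ) : ℂ) ^ z - 1 - z * x‖ ≤ (9 / 4 * ‖z‖ ^ 2 + ‖z‖) * x ^ 2 := by
  have hnx : ‖(x : ℂ)‖ = x := by simp [abs_of_nonneg hx]
  have hne : ((1 + x : ℝ) : ℂ) ≠ 0 := by
    exact_mod_cast (by positivity : (1 + x) ≠ 0)
  rw [Complex.cpow_def_of_ne_zero hne]
  push_cast
  have hL1 := Complex.norm_log_one_add_sub_self_le (z := (x : ℂ)) (by rw [hnx]; linarith)
  have hL2 := Complex.norm_log_one_add_half_le_self (z := (x : ℂ)) (by rw [hnx]; linarith)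
  rw [hnx] at hL1 hL2
  set L := Complex.log (1 + x)
  have hL1' : ‖L - x‖ ≤ x ^ 2 := by
    refine hL1.trans ?_
    have : (1 - x)⁻¹ ≤ 2 := by
      rw [inv_le_comm₀ (by linarith) (by norm_num)]; linarith
    nlinarith [sq_nonneg x]
  have hLz : ‖L * z‖ ≤ 3 / 2 * (‖z‖ * x) := by
    rw [norm_mul]; nlinarith [norm_nonneg z]
  have h1 := Complex.norm_exp_sub_one_sub_id_le (x := L * z) (by linarith)
  have e : Complex.exp (L * z) - 1 - z * x = (Complex.exp (L * z) - 1 - L * z) + z * (L - x) := by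
    ring
  rw [e]
  refine (norm_add_le _ _).trans ?_
  rw [norm_mul z]
  have h2 : ‖L * z‖ ^ 2 ≤ (3 / 2 * (‖z‖ * x)) ^ 2 := pow_le_pow_left₀ (norm_nonneg _) hLz 2
  have h3 : ‖z‖ * ‖L - x‖ ≤ ‖z‖ * x ^ 2 := mul_le_mul_of_nonneg_left hL1' (norm_nonneg _)
  nlinarith

lemma aux_c_bound (z : ℂ) (s : ℝ) (hs : 0 < s) (hs1 : s ≤ 1 / 2) (hsz : s * ‖z‖ ≤ 1) :
    ‖z - (1 - Complex.exp (-(s * z))) / ((1 - Real.exp (-s) : ℝ) : ℂ)‖ ≤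
      2 * (‖z‖ + ‖z‖ ^ 2) * s := by
  have hd : s / 2 ≤ 1 - Real.exp (-s) := by
    have := Real.norm_exp_sub_one_sub_id_le (x := -s) (by rw [norm_neg, Real.norm_of_nonneg hs.le]; linarith)
    rw [norm_neg, Real.norm_of_nonneg hs.le, Real.norm_eq_abs] at this
    have := (abs_le.mp this).2
    nlinarith
  have h1 := Complex.norm_exp_sub_one_sub_id_le (x := -(s * z))
    (by rw [norm_neg, norm_mul, Complex.norm_of_nonneg hs.le]; exact hsz)
  have h2 := Complex.norm_exp_sub_one_sub_id_le (x := -(s : ℂ))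
    (by rw [norm_neg, Complex.norm_of_nonneg hs.le]; linarith)
  rw [norm_neg, norm_mul, Complex.norm_of_nonneg hs.le] at h1
  rw [norm_neg, Complex.norm_of_nonneg hs.le] at h2
  set d : ℝ := 1 - Real.exp (-s) with hdd
  have hd0 : 0 < d := by linarith
  have hdc : (d : ℂ) ≠ 0 := by exact_mod_cast hd0.ne'
  have hd' : (d : ℂ) = 1 - Complex.exp (-(s : ℂ)) := by rw [hdd]; push_cast; rfl
  have e : z - (1 - Complex.exp (-(s * z))) / (d : ℂ) =
      ((Complex.exp (-(s * z)) - 1 - -(s * z)) - z * (Complex.exp (-(s : ℂ)) - 1 - -(s : ℂ))) / d := by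
    field_simp
    rw [hd']; ring
  rw [e, norm_div, Complex.norm_of_nonneg hd0.le, div_le_iff₀ hd0]
  refine (norm_sub_le _ _).trans ?_
  rw [norm_mul z]
  have h3 := mul_le_mul_of_nonneg_left h2 (norm_nonneg z)
  have h4 : 2 * (‖z‖ + ‖z‖ ^ 2) * s * (s / 2) ≤ 2 * (‖z‖ + ‖z‖ ^ 2) * s * d := by gcongr
  nlinarith

lemma aux_exp_lt {s : ℝ} (hs : 0 < s) : Real.exp (-s) < 1 := by
  rw [← Real.exp_zero]
  exact Real.exp_lt_exp.mpr (by linarith)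

noncomputable def auxA (s : ℝ) (n : ℕ) : ℝ := 1 - Real.exp (-s) ^ (n + 1)

noncomputable def auxX (s : ℝ) (n : ℕ) : ℝ :=
  Real.exp (-s) ^ (n + 1) * (1 - Real.exp (-s)) / auxA s n

noncomputable def auxC (z : ℂ) (s : ℝ) : ℂ :=
  (1 - Complex.exp (-(s * z))) / ((1 - Real.exp (-s) : ℝ) : ℂ)

noncomputable def auxF (z : ℂ) (s : ℝ) (n : ℕ) : ℂ :=
  ((auxA s (n + 1) / auxA s n : ℝ) : ℂ) ^ z *
    ((auxA s n : ℂ) / (1 - ((Real.exp (-s) : ℝ) : ℂ) ^ (n + 1) * Complex.exp (-(s * z))))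

lemma auxA_pos (s : ℝ) (hs : 0 < s) (n : ℕ) : 0 < auxA s n := by
  unfold auxA
  have : Real.exp (-s) ^ (n + 1) < 1 :=
    pow_lt_one₀ (Real.exp_pos _).le (aux_exp_lt hs) (Nat.succ_ne_zero n)
  linarith

lemma auxX_bounds (s : ℝ) (hs : 0 < s) (n : ℕ) :
    0 ≤ auxX s n ∧ auxX s n * ((n : ℝ) + 1) ≤ 1 ∧ s * auxX s n * ((n : ℝ) + 1) ^ 2 ≤ 2 := by
  have hA := auxA_pos s hs n
  have hr : Real.exp (-s) < 1 := aux_exp_lt hs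
  have hr0 := Real.exp_pos (-s)
  have hX : 0 ≤ auxX s n := by
    unfold auxX
    have : 0 ≤ 1 - Real.exp (-s) := by linarith
    positivity
  have h1r : 1 - Real.exp (-s) ≤ s := by
    have := Real.add_one_le_exp (-s); linarith
  set y : ℝ := s * ((n : ℝ) + 1) with hy
  have hy0 : 0 < y := by positivity
  have hpow : Real.exp (-s) ^ (n + 1) * Real.exp y = 1 := by
    rw [← Real.exp_nat_mul, ← Real.exp_add, hy]
    push_cast
    rw [show ((n : ℝ) + 1) * -s + s * ((n : ℝ) + 1) = 0 by ring, Real.exp_zero]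
  have hXy : auxX s n * (Real.exp y - 1) = 1 - Real.exp (-s) := by
    have h2 : Real.exp (-s) ^ (n + 1) * (Real.exp y - 1) = auxA s n := by
      unfold auxA; linear_combination hpow
    have h3 : auxX s n * auxA s n = Real.exp (-s) ^ (n + 1) * (1 - Real.exp (-s)) := by
      unfold auxX; field_simp
    have h4 : auxA s n * (auxX s n * (Real.exp y - 1)) = auxA s n * (1 - Real.exp (-s)) := by
      linear_combination (Real.exp y - 1) * h3 + (1 - Real.exp (-s)) * h2
    exact mul_left_cancel₀ hA.ne' h4
  have hq := Real.quadratic_le_exp_of_nonneg hy0.le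
  have hle : auxX s n * (y + y ^ 2 / 2) ≤ s := by
    have : auxX s n * (y + y ^ 2 / 2) ≤ auxX s n * (Real.exp y - 1) := by
      gcongr; linarith
    linarith
  refine ⟨hX, ?_, ?_⟩
  · have : auxX s n * y ≤ s := by nlinarith [sq_nonneg y, mul_nonneg hX (sq_nonneg y)]
    rw [hy] at this
    have : s * (auxX s n * ((n : ℝ) + 1)) ≤ s * 1 := by linarith
    exact le_of_mul_le_mul_left this hs
  · have : auxX s n * (y ^ 2 / 2) ≤ s := by nlinarith [mul_nonneg hX hy0.le]
    rw [hy] at this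
    have : s * (s * auxX s n * ((n : ℝ) + 1) ^ 2) ≤ s * 2 := by linarith
    exact le_of_mul_le_mul_left this hs

lemma auxF_eq (z : ℂ) (s : ℝ) (hs : 0 < s) (n : ℕ) :
    auxF z s n = ((1 + auxX s n : ℝ) : ℂ) ^ z / (1 + auxC z s * auxX s n) := by
  have hA := auxA_pos s hs n
  have hr : 0 < 1 - Real.exp (-s) := by
    have : Real.exp (-s) < 1 := aux_exp_lt hs
    linarith
  have e1 : auxA s (n + 1) / auxA s n = 1 + auxX s n := by
    unfold auxX
    field_simp
    unfold auxA
    ring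
  have hAc : (auxA s n : ℂ) ≠ 0 := by exact_mod_cast hA.ne'
  have hrc : ((1 - Real.exp (-s) : ℝ) : ℂ) ≠ 0 := by exact_mod_cast hr.ne'
  have hAd : (auxA s n : ℂ) = 1 - ((Real.exp (-s) : ℝ) : ℂ) ^ (n + 1) := by
    unfold auxA; push_cast; rfl
  have e2 : 1 + auxC z s * auxX s n =
      (1 - ((Real.exp (-s) : ℝ) : ℂ) ^ (n + 1) * Complex.exp (-(s * z))) / (auxA s n : ℂ) := by
    have hXc : (auxX s n : ℂ) = ((Real.exp (-s) : ℝ) : ℂ) ^ (n + 1) *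
      ((1 - Real.exp (-s) : ℝ) : ℂ) / (auxA s n : ℂ) := by
      unfold auxX; rw [Complex.ofReal_div, Complex.ofReal_mul, Complex.ofReal_pow]
    rw [hXc]
    unfold auxC
    field_simp
    rw [hAd]
    ring
  unfold auxF
  rw [e1, e2, div_div_eq_mul_div, mul_div_assoc]

lemma auxF_tendsto (z : ℂ) (hz : ∀ n : ℕ, z ≠ -(n : ℂ)) (n : ℕ) :
    Tendsto (fun s : ℝ => auxF z s n) (𝓝[>] 0)
      (𝓝 ((((((n : ℝ) + 1 + 1) / ((n : ℝ) + 1) : ℝ) : ℂ) ^ z / (1 + z / ((n : ℂ) + 1))))) := by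
  have hAc : ∀ m : ℕ, Tendsto (fun s : ℝ => ((auxA s m / s : ℝ) : ℂ)) (𝓝[>] 0)
      (𝓝 (((m : ℝ) + 1 : ℝ) : ℂ)) := by
    intro m
    have := aux_lin ((m : ℂ) + 1)
    push_cast
    refine this.congr (fun s => ?_)
    unfold auxA
    push_cast
    rw [← Complex.exp_nat_mul]
    push_cast
    congr 3
    ring_nf
  have hn1 : ((n : ℂ) + 1) ≠ 0 := by exact_mod_cast Nat.succ_ne_zero n
  have hnz : ((n : ℂ) + 1) + z ≠ 0 := by
    intro h
    apply hz (n + 1)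
    push_cast
    linear_combination h
  have h1 : Tendsto (fun s : ℝ => ((auxA s (n + 1) / auxA s n : ℝ) : ℂ)) (𝓝[>] 0)
      (𝓝 ((((n : ℝ) + 1 + 1) / ((n : ℝ) + 1) : ℝ) : ℂ)) := by
    have := (hAc (n + 1)).div (hAc n) (by exact_mod_cast hn1)
    push_cast at this ⊢
    refine this.congr' ?_
    filter_upwards [self_mem_nhdsWithin] with s hs
    have hs0 : (s : ℂ) ≠ 0 := by exact_mod_cast (ne_of_gt hs)
    simp only [Pi.div_apply]
    rw [div_div_div_cancel_right₀ hs0]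
  have h2 := h1.cpow (tendsto_const_nhds (x := z))
    (Complex.ofReal_mem_slitPlane.mpr (by positivity))
  have h3 := (hAc n).div (aux_lin (((n : ℂ) + 1) + z)) hnz
  have h4 := h2.mul h3
  have e : ((((((n : ℝ) + 1 + 1) / ((n : ℝ) + 1) : ℝ) : ℂ) ^ z / (1 + z / ((n : ℂ) + 1)))) =
      (((((n : ℝ) + 1 + 1) / ((n : ℝ) + 1) : ℝ) : ℂ) ^ z *
        ((((n : ℝ) + 1 : ℝ) : ℂ) / (((n : ℂ) + 1) + z))) := by
    have : 1 + z / ((n : ℂ) + 1) = (((n : ℂ) + 1) + z) / ((n : ℂ) + 1) := by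
      field_simp
    rw [this, div_div_eq_mul_div, mul_div_assoc]
    push_cast
    rfl
  rw [e]
  refine h4.congr' ?_
  filter_upwards [self_mem_nhdsWithin] with s hs
  have hs0 : (s : ℂ) ≠ 0 := by exact_mod_cast (ne_of_gt hs)
  unfold auxF
  simp only [Pi.div_apply]
  congr 1
  rw [Complex.ofReal_div, div_div_div_cancel_right₀ hs0]
  congr 2
  push_cast
  rw [← Complex.exp_nat_mul, ← Complex.exp_add]
  congr 1
  push_cast
  ring

lemma auxF_dom (z : ℂ) (hz : ∀ n : ℕ, z ≠ -(n : ℂ)) :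
    ∃ bd : ℕ → ℝ, Summable bd ∧ ∀ᶠ s : ℝ in 𝓝[>] 0, ∀ n, ‖auxF z s n - 1‖ ≤ bd n := by
  obtain ⟨N, hN⟩ := exists_nat_ge (2 * (‖z‖ + 1))
  set g : ℕ → ℂ := fun n =>
    (((((n : ℝ) + 1 + 1) / ((n : ℝ) + 1) : ℝ) : ℂ) ^ z / (1 + z / ((n : ℂ) + 1))) with hg
  set K : ℝ := 2 * ((9 / 4 * ‖z‖ ^ 2 + ‖z‖) + 2 * (‖z‖ + ‖z‖ ^ 2) * 2) with hK
  refine ⟨fun n => if n < N then ‖g n - 1‖ + 1 else K * (1 / ((n : ℝ) + 1) ^ 2), ?_, ?_⟩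
  · have h1 : Summable (fun n : ℕ => K * (1 / ((n : ℝ) + 1) ^ 2)) := by
      refine Summable.mul_left _ ?_
      have := (summable_nat_add_iff 1).mpr (Real.summable_one_div_nat_pow.mpr (by norm_num : 1 < 2))
      simpa using this
    refine h1.congr_cofinite ?_
    rw [Nat.cofinite_eq_atTop]
    filter_upwards [eventually_ge_atTop N] with n hn
    simp [not_lt.mpr hn]
  · have hfin : ∀ᶠ s : ℝ in 𝓝[>] 0, ∀ n ∈ Finset.range N, ‖auxF z s n - 1‖ < ‖g n - 1‖ + 1 := by
      rw [Filter.eventually_all_finset]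
      intro n _
      have := ((auxF_tendsto z hz n).sub_const 1).norm
      exact this.eventually (gt_mem_nhds (by linarith))
    have hs1 : ∀ᶠ s : ℝ in 𝓝[>] 0, s < 1 / 2 := by
      refine nhdsWithin_le_nhds (gt_mem_nhds (by norm_num))
    have hs2 : ∀ᶠ s : ℝ in 𝓝[>] 0, s * ‖z‖ < 1 := by
      have : ContinuousAt (fun s : ℝ => s * ‖z‖) 0 := by fun_prop
      exact nhdsWithin_le_nhds (this.eventually (gt_mem_nhds (by simp)))
    have hs3 : ∀ᶠ s : ℝ in 𝓝[>] 0, 2 * (‖z‖ + ‖z‖ ^ 2) * s < 1 := by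
      have : ContinuousAt (fun s : ℝ => 2 * (‖z‖ + ‖z‖ ^ 2) * s) 0 := by fun_prop
      exact nhdsWithin_le_nhds (this.eventually (gt_mem_nhds (by simp)))
    filter_upwards [hfin, hs1, hs2, hs3, self_mem_nhdsWithin] with s hf h1 h2 h3 hs n
    have hs : 0 < s := hs
    by_cases hn : n < N
    · simp only [hn, if_true]
      exact (hf n (Finset.mem_range.mpr hn)).le
    · simp only [hn, if_false]
      have hnN : (N : ℝ) ≤ n := by exact_mod_cast not_lt.mp hn
      obtain ⟨hX0, hX1, hX2⟩ := auxX_bounds s hs n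
      have hc := aux_c_bound z s hs h1.le h2.le
      change ‖z - auxC z s‖ ≤ _ at hc
      rw [auxF_eq z s hs n]
      set X := auxX s n
      set c := auxC z s
      have hn0 : (0 : ℝ) < (n : ℝ) + 1 := by positivity
      have hcn : ‖c‖ ≤ ‖z‖ + 1 := by
        have := norm_sub_norm_le c z
        rw [norm_sub_rev] at this
        linarith
      have hzX : (‖z‖ + 1) * X ≤ 1 / 2 := by nlinarith [norm_nonneg z]
      have hzX' : ‖z‖ * X ≤ 1 / 2 := by linarith
      have hX12 : X ≤ 1 / 2 := by nlinarith [norm_nonneg z, mul_nonneg (norm_nonneg z) hX0]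
      have hcX : ‖c * X‖ ≤ 1 / 2 := by
        rw [norm_mul, Complex.norm_of_nonneg hX0]
        exact (mul_le_mul_of_nonneg_right hcn hX0).trans hzX
      have hden : 1 / 2 ≤ ‖1 + c * X‖ := by
        have := norm_sub_norm_le (1 : ℂ) (-(c * X))
        rw [norm_one, norm_neg, sub_neg_eq_add] at this
        linarith
      have hden0 : 1 + c * (X : ℂ) ≠ 0 := by
        intro h; rw [h, norm_zero] at hden; norm_num at hden
      have e : ((1 + X : ℝ) : ℂ) ^ z / (1 + c * X) - 1 =
          ((((1 + X : ℝ) : ℂ) ^ z - 1 - z * X) + (z - c) * X) / (1 + c * X) := by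
        field_simp
        ring
      rw [e, norm_div, div_le_iff₀ (by linarith)]
      have b1 := aux_cpow_bound z X hX0 hX12 hzX'
      have b2 : ‖(z - c) * X‖ ≤ 2 * (‖z‖ + ‖z‖ ^ 2) * (s * X) := by
        rw [norm_mul, Complex.norm_of_nonneg hX0]
        nlinarith
      have b3 : X ^ 2 ≤ 1 / ((n : ℝ) + 1) ^ 2 := by
        rw [le_div_iff₀ (by positivity), ← mul_pow]
        exact pow_le_one₀ (by positivity) hX1
      have b4 : s * X ≤ 2 * (1 / ((n : ℝ) + 1) ^ 2) := by
        rw [mul_one_div, le_div_iff₀ (by positivity)]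
        exact hX2
      set u : ℝ := 1 / ((n : ℝ) + 1) ^ 2
      have hu : 0 ≤ u := by positivity
      have hK0 : 0 ≤ K := by rw [hK]; positivity
      calc _ ≤ ‖((1 + X : ℝ) : ℂ) ^ z - 1 - z * X‖ + ‖(z - c) * X‖ := norm_add_le _ _
        _ ≤ (9 / 4 * ‖z‖ ^ 2 + ‖z‖) * u + 2 * (‖z‖ + ‖z‖ ^ 2) * (2 * u) := by
          refine add_le_add (b1.trans ?_) (b2.trans ?_)
          · gcongr
          · gcongr
        _ = K * u * (1 / 2) := by rw [hK]; ring
        _ ≤ K * u * ‖1 + c * X‖ := by gcongr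

lemma auxF_prod_tendsto (z : ℂ) (hz : ∀ n : ℕ, z ≠ -(n : ℂ)) :
    Tendsto (fun s : ℝ => ∏' n, auxF z s n) (𝓝[>] 0) (𝓝 (z * Complex.Gamma z)) ∧
    ∀ᶠ s : ℝ in 𝓝[>] 0, Multipliable (auxF z s) := by
  obtain ⟨bd, hbd, hev⟩ := auxF_dom z hz
  constructor
  · have key := tendsto_tprod_one_add_of_dominated_convergence hbd
      (fun n => (auxF_tendsto z hz n).sub_const 1) hev
    simp only [add_sub_cancel] at key
    convert key using 2
    refine tendsto_nhds_unique (aux_euler z hz) ?_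
    refine Multipliable.tendsto_prod_tprod_nat ?_
    have hs : Summable (fun n : ℕ => ‖(((((n : ℝ) + 1 + 1) / ((n : ℝ) + 1) : ℝ) : ℂ) ^ z /
        (1 + z / ((n : ℂ) + 1))) - 1‖) := by
      refine Summable.of_nonneg_of_le (fun _ => norm_nonneg _) (fun n => ?_) hbd
      exact le_of_tendsto ((auxF_tendsto z hz n).sub_const 1).norm (hev.mono fun s hs => hs n)
    simpa using multipliable_one_add_of_summable hs
  · filter_upwards [hev] with s hs
    have : Summable (fun n => ‖auxF z s n - 1‖) :=
      Summable.of_nonneg_of_le (fun _ => norm_nonneg _) hs hbd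
    simpa using multipliable_one_add_of_summable this

lemma aux_D_ne_zero (r : ℂ) (hr : ‖r‖ < 1) : ∏' l : ℕ, (1 - r ^ l * r)⁻¹ ≠ 0 := by
  have h1 := (aux_multipliable_inv r r hr).tendsto_prod_tprod_nat
  have hs : Summable (fun l : ℕ => ‖-(r ^ l * r)‖) := by
    simp only [norm_neg, norm_mul, norm_pow]
    exact (summable_geometric_of_lt_one (norm_nonneg _) hr).mul_right _
  have h2 := (multipliable_one_add_of_summable hs).tendsto_prod_tprod_nat
  have h3 := h1.mul h2
  have h4 : Tendsto (fun N : ℕ => (∏ l ∈ Finset.range N, (1 - r ^ l * r)⁻¹) *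
      ∏ l ∈ Finset.range N, (1 + -(r ^ l * r))) atTop (𝓝 1) := by
    refine tendsto_const_nhds.congr (fun N => ?_)
    rw [← Finset.prod_mul_distrib]
    refine (Finset.prod_eq_one (fun l _ => ?_)).symm
    rw [← sub_eq_add_neg]
    refine inv_mul_cancel₀ ?_
    intro h
    have h5 : r ^ (l + 1) = 1 := by rw [pow_succ]; exact (sub_eq_zero.mp h).symm
    have h6 : ‖r‖ ^ (l + 1) < 1 := pow_lt_one₀ (norm_nonneg _) hr (Nat.succ_ne_zero l)
    rw [← norm_pow, h5, norm_one] at h6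
    exact lt_irrefl _ h6
  have h5 := tendsto_nhds_unique h3 h4
  intro h
  rw [h, zero_mul] at h5
  exact zero_ne_one h5

lemma aux_norm_r (s : ℝ) (hs : 0 < s) : ‖((Real.exp (-s) : ℝ) : ℂ)‖ < 1 := by
  rw [Complex.norm_of_nonneg (Real.exp_pos _).le]
  exact aux_exp_lt hs

lemma aux_qgamma_eq (z : ℂ) (s : ℝ) (hs : 0 < s) (hm : Multipliable (auxF z s)) :
    (1 - ((Real.exp (-s) : ℝ) : ℂ)) ^ (1 - z) *
      ((∏' l : ℕ, (1 - ((Real.exp (-s) : ℝ) : ℂ) ^ l * Complex.exp (-(s * z)))⁻¹) /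
        ∏' l : ℕ, (1 - ((Real.exp (-s) : ℝ) : ℂ) ^ l * ((Real.exp (-s) : ℝ) : ℂ))⁻¹) =
    (auxC z s)⁻¹ * ∏' n, auxF z s n := by
  have hA0 := auxA_pos s hs
  have hCdef : auxC z s = (1 - Complex.exp (-(s * z))) / (auxA s 0 : ℂ) := by
    unfold auxC auxA; simp
  have hr : ‖((Real.exp (-s) : ℝ) : ℂ)‖ < 1 := aux_norm_r s hs
  have hAd : ∀ n, (auxA s n : ℂ) = 1 - ((Real.exp (-s) : ℝ) : ℂ) ^ n * ((Real.exp (-s) : ℝ) : ℂ) := by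
    intro n; unfold auxA; rw [← pow_succ]; push_cast; rfl
  have hA0' : 1 - ((Real.exp (-s) : ℝ) : ℂ) = (auxA s 0 : ℂ) := by rw [hAd]; simp
  rw [hA0', hCdef]
  set w := Complex.exp (-(s * z)) with hw
  have hFd : ∀ n, auxF z s n = ((auxA s (n + 1) / auxA s n : ℝ) : ℂ) ^ z *
    ((auxA s n : ℂ) / (1 - ((Real.exp (-s) : ℝ) : ℂ) ^ (n + 1) * w)) := fun n => rfl
  set r : ℂ := ((Real.exp (-s) : ℝ) : ℂ) with hrdef
  have t1 := ((aux_multipliable_inv r w hr).tendsto_prod_tprod_nat).comp (tendsto_add_atTop_nat 1)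
  have t2 := (aux_multipliable_inv r r hr).tendsto_prod_tprod_nat
  have t3 := (t1.div t2 (aux_D_ne_zero r hr)).const_mul ((auxA s 0 : ℂ) ^ (1 - z))
  have t4 := hm.tendsto_prod_tprod_nat
  have t5 : Tendsto (fun N : ℕ => ((auxA s N : ℝ) : ℂ) ^ (-z)) atTop (𝓝 1) := by
    have h : Tendsto (fun N : ℕ => (auxA s N : ℂ)) atTop (𝓝 (1 - 0 * r)) := by
      simp only [hAd]
      exact tendsto_const_nhds.sub ((tendsto_pow_atTop_nhds_zero_of_norm_lt_one hr).mul_const r)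
    have h' := h.cpow (tendsto_const_nhds (x := -z)) (by simp)
    simpa using h'
  have t6 := (t4.mul t5).const_mul (((1 - w) / (auxA s 0 : ℂ))⁻¹)
  rw [mul_one] at t6
  refine tendsto_nhds_unique t3 (t6.congr (fun N => ?_))
  simp only [Function.comp, Pi.div_apply]
  rw [Finset.prod_congr rfl (fun n _ => hFd n), Finset.prod_mul_distrib,
    aux_telescope (auxA s) hA0 z N, Finset.prod_range_succ', Finset.prod_div_distrib,
    Finset.prod_inv_distrib, Finset.prod_inv_distrib,
    Finset.prod_congr rfl (fun n _ => (hAd n).symm)]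
  have hAN : ((auxA s N : ℝ) : ℂ) ≠ 0 := by exact_mod_cast (hA0 N).ne'
  have hAz : ((auxA s 0 : ℝ) : ℂ) ≠ 0 := by exact_mod_cast (hA0 0).ne'
  have q1 : ((auxA s N / auxA s 0 : ℝ) : ℂ) ^ z * (auxA s N : ℂ) ^ (-z) =
      (auxA s 0 : ℂ) ^ (-z) := by
    have h := Complex.mul_cpow_ofReal_nonneg (div_nonneg (hA0 N).le (hA0 0).le) (hA0 0).le z
    have e : ((auxA s N / auxA s 0 : ℝ) : ℂ) * (auxA s 0 : ℂ) = (auxA s N : ℂ) := by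
      push_cast; field_simp
    rw [e] at h
    have hz1 : (auxA s N : ℂ) ^ z ≠ 0 := by simp [Complex.cpow_eq_zero_iff, hAN]
    have hz0 : (auxA s 0 : ℂ) ^ z ≠ 0 := by simp [Complex.cpow_eq_zero_iff, hAz]
    rw [Complex.cpow_neg, Complex.cpow_neg]
    field_simp
    exact h.symm
  rw [sub_eq_add_neg (1 : ℂ) z, Complex.cpow_add _ _ hAz, Complex.cpow_one, ← q1]
  simp only [pow_zero, one_mul, div_eq_mul_inv, mul_inv_rev, inv_inv]
  ring

lemma aux_qexp_tendsto : Tendsto qexp (Filter.comap Complex.im Filter.atTop) (𝓝 0) := by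
  rw [tendsto_zero_iff_norm_tendsto_zero]
  have e : ∀ τ : ℂ, ‖qexp τ‖ = Real.exp (-(2 * Real.pi * τ.im)) := by
    intro τ
    unfold qexp
    rw [Complex.norm_exp]
    congr 1
    simp
  simp only [e]
  refine Real.tendsto_exp_neg_atTop_nhds_zero.comp ?_
  exact (tendsto_comap).const_mul_atTop (by positivity)

/-- the Euler gamma function as an iterated limit of the elliptic gamma
function: `Γ(z) = lim_{σ→0} lim_{τ→i∞} θ₀(σ,τ)^{1-z} Γ(σz,τ,σ)/Γ(σ,τ,σ)`, with `σ = it`,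
`t → 0⁺`, and the principal branch used for the complex power. -/
theorem eulerGamma_limit_of_ellipticGamma (z : ℂ) (hz : ∀ n : ℕ, z ≠ -(n : ℂ)) :
    ∃ F : ℝ → ℂ,
      (∀ t : ℝ, 0 < t →
        Tendsto (fun τ : ℂ =>
            theta0 ((t : ℂ) * Complex.I) τ ^ (1 - z) *
              (ellipticGamma ((t : ℂ) * Complex.I * z) τ ((t : ℂ) * Complex.I) /
                ellipticGamma ((t : ℂ) * Complex.I) τ ((t : ℂ) * Complex.I)))
          (Filter.comap Complex.im Filter.atTop) (𝓝 (F t))) ∧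
      Tendsto F (𝓝[>] (0 : ℝ)) (𝓝 (Complex.Gamma z)) := by
  have hq : ∀ t : ℝ, qexp ((t : ℂ) * Complex.I) = ((Real.exp (-(2 * Real.pi * t)) : ℝ) : ℂ) := by
    intro t
    unfold qexp
    push_cast
    congr 1
    linear_combination (2 * (Real.pi : ℂ) * t) * Complex.I_mul_I
  have hw : ∀ (t : ℝ) (u : ℂ), Complex.exp (2 * Real.pi * Complex.I * ((t : ℂ) * Complex.I * u)) =
      Complex.exp (-(((2 * Real.pi * t : ℝ) : ℂ) * u)) := by
    intro t u
    push_cast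
    congr 1
    linear_combination (2 * (Real.pi : ℂ) * t * u) * Complex.I_mul_I
  have hinv : ∀ u : ℂ, Complex.exp (-(2 * Real.pi * Complex.I) * u) =
      (Complex.exp (2 * Real.pi * Complex.I * u))⁻¹ := by
    intro u
    rw [← Complex.exp_neg]
    congr 1
    ring
  have hq' : ∀ t : ℝ, Complex.exp (2 * Real.pi * Complex.I * ((t : ℂ) * Complex.I)) =
      ((Real.exp (-(2 * Real.pi * t)) : ℝ) : ℂ) := hq
  have hspos : ∀ t : ℝ, 0 < t → 0 < 2 * Real.pi * t := fun t ht => by positivity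
  refine ⟨fun t => (1 - ((Real.exp (-(2 * Real.pi * t)) : ℝ) : ℂ)) ^ (1 - z) *
      ((∏' l : ℕ, (1 - ((Real.exp (-(2 * Real.pi * t)) : ℝ) : ℂ) ^ l *
          Complex.exp (-(((2 * Real.pi * t : ℝ) : ℂ) * z)))⁻¹) /
        ∏' l : ℕ, (1 - ((Real.exp (-(2 * Real.pi * t)) : ℝ) : ℂ) ^ l *
          ((Real.exp (-(2 * Real.pi * t)) : ℝ) : ℂ))⁻¹), ?_, ?_⟩
  · intro t ht
    have hs := hspos t ht
    have hr := aux_norm_r _ hs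
    have hr1 := aux_exp_lt hs
    have hr0 : ((Real.exp (-(2 * Real.pi * t)) : ℝ) : ℂ) ≠ 0 := by
      exact_mod_cast (Real.exp_pos _).ne'
    refine Tendsto.mul ?_ (Tendsto.div ?_ ?_ (aux_D_ne_zero _ hr))
    · refine Tendsto.cpow ?_ tendsto_const_nhds ?_
      · have := (aux_tprod_theta ((Real.exp (-(2 * Real.pi * t)) : ℝ) : ℂ)).comp aux_qexp_tendsto
        refine this.congr (fun τ => ?_)
        simp only [Function.comp, theta0, hinv, hq']
      · rw [← Complex.ofReal_one, ← Complex.ofReal_sub]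
        exact Complex.ofReal_mem_slitPlane.mpr (by linarith)
    · have := (aux_tprod_gamma ((Real.exp (-(2 * Real.pi * t)) : ℝ) : ℂ)
        (Complex.exp (-(((2 * Real.pi * t : ℝ) : ℂ) * z))) hr (Complex.exp_ne_zero _)).comp
        aux_qexp_tendsto
      refine this.congr (fun τ => ?_)
      simp only [Function.comp, ellipticGamma, hinv, hw, hq]
    · have := (aux_tprod_gamma ((Real.exp (-(2 * Real.pi * t)) : ℝ) : ℂ)
        ((Real.exp (-(2 * Real.pi * t)) : ℝ) : ℂ) hr hr0).comp aux_qexp_tendsto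
      refine this.congr (fun τ => ?_)
      simp only [Function.comp, ellipticGamma, hinv, hq', hq]
  · have hz0 : z ≠ 0 := by simpa using hz 0
    obtain ⟨h1, h2⟩ := auxF_prod_tendsto z hz
    have hC : Tendsto (fun s : ℝ => auxC z s) (𝓝[>] 0) (𝓝 z) := by
      have h := (aux_lin z).div (aux_lin 1) one_ne_zero
      rw [div_one] at h
      refine h.congr' ?_
      filter_upwards [self_mem_nhdsWithin] with s hs
      have hs0 : (s : ℂ) ≠ 0 := by exact_mod_cast (ne_of_gt hs)
      simp only [Pi.div_apply, auxC]
      rw [div_div_div_cancel_right₀ hs0]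
      push_cast
      rw [mul_one]
    have h3 := (hC.inv₀ hz0).mul h1
    rw [inv_mul_cancel_left₀ hz0] at h3
    have hsc : Tendsto (fun t : ℝ => 2 * Real.pi * t) (𝓝[>] 0) (𝓝[>] 0) := by
      refine tendsto_nhdsWithin_iff.mpr ⟨?_, ?_⟩
      · have : ContinuousAt (fun t : ℝ => 2 * Real.pi * t) 0 := by fun_prop
        have h := this.tendsto
        rw [mul_zero] at h
        exact h.mono_left nhdsWithin_le_nhds
      · filter_upwards [self_mem_nhdsWithin] with t ht
        exact hspos t ht
    refine (h3.comp hsc).congr' ?_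
    filter_upwards [self_mem_nhdsWithin, hsc.eventually h2] with t ht hm
    exact (aux_qgamma_eq z _ (hspos t ht) hm).symm
end
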